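/- Let V_3, V_4, V_5, … be a sequence where each V_n is a finite-dimensional complex representation of SL_n(ℤ). If dim V_n ≤ n^k for some fixed k and all n, then V_n is algebraic for all sufficiently large n. -/

import Mathlib

open Matrix

/-- A representation of `SL_n(ℂ)` is algebraic (rational) if each matrix entry of `ρ(g)`
is a polynomial function of the matrix entries of `g`. -/
def IsAlgebraicSL {n N : ℕ}
    (ρ : Matrix.SpecialLinearGroup (Fin n) ℂ →* GL (Fin N) ℂ) : Prop :=
  ∀ i j : Fin N, ∃ P : MvPolynomial (Fin n × Fin n) ℂ,
    ∀ g : Matrix.SpecialLinearGroup (Fin n) ℂ,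
      (ρ g : Matrix (Fin N) (Fin N) ℂ) i j =
        MvPolynomial.eval (fun q => (g : Matrix (Fin n) (Fin n) ℂ) q.1 q.2) P

/-- A representation `ρ` of `SL_n(ℤ)` has depth dividing `ℓ` if its restriction to the
principal congruence subgroup `Γ_n(ℓ)` agrees with (the restriction of) an algebraic
representation of `SL_n(ℂ)`. -/
def DepthDvd {n N : ℕ} (ρ : Matrix.SpecialLinearGroup (Fin n) ℤ →* GL (Fin N) ℂ)
    (ℓ : ℕ) : Prop :=
  ∃ ρ' : Matrix.SpecialLinearGroup (Fin n) ℂ →* GL (Fin N) ℂ, IsAlgebraicSL ρ' ∧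
    ∀ g ∈ (Matrix.SpecialLinearGroup.map (n := Fin n) (Int.castRingHom (ZMod ℓ))).ker,
      ρ g = ρ' (Matrix.SpecialLinearGroup.map (Int.castRingHom ℂ) g)


namespace SLP

section elem
variable {n : ℕ} {R : Type*} [CommRing R]

/-- elementary matrix as an element of SL, junk `1` when `i = j` -/
def el (i j : Fin n) (t : R) : Matrix.SpecialLinearGroup (Fin n) R :=
  if h : i ≠ j then Matrix.SpecialLinearGroup.transvection h t else 1

lemma el_coe {i j : Fin n} (h : i ≠ j) (t : R) :
    ((el i j t : Matrix.SpecialLinearGroup (Fin n) R) : Matrix (Fin n) (Fin n) R)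
      = Matrix.transvection i j t := by
  rw [el, dif_pos h]; rfl

lemma mul_el_apply {i j : Fin n} (h : i ≠ j) (t : R)
    (x : Matrix.SpecialLinearGroup (Fin n) R) (p q : Fin n) :
    (x * el i j t) p q = x p q + if q = j then t * x p i else 0 := by
  rw [Matrix.SpecialLinearGroup.coe_mul, el_coe h]
  split_ifs with hq
  · subst hq; simp
  · simp [hq]

lemma el_mul_apply {i j : Fin n} (h : i ≠ j) (t : R)
    (x : Matrix.SpecialLinearGroup (Fin n) R) (p q : Fin n) :
    (el i j t * x) p q = x p q + if p = i then t * x j q else 0 := by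
  rw [Matrix.SpecialLinearGroup.coe_mul, el_coe h]
  split_ifs with hq
  · subst hq; simp
  · simp [hq]

lemma el_apply {i j : Fin n} (h : i ≠ j) (t : R) (p q : Fin n) :
    (el i j t : Matrix.SpecialLinearGroup (Fin n) R) p q =
      (1 : Matrix (Fin n) (Fin n) R) p q + if p = i ∧ q = j then t else 0 := by
  have := mul_el_apply h t (1 : Matrix.SpecialLinearGroup (Fin n) R) p q
  rw [one_mul] at this
  rw [this]
  simp only [Matrix.SpecialLinearGroup.coe_one, Matrix.one_apply]
  by_cases hq : q = j <;> by_cases hp : p = i <;> simp [hp, hq]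

lemma el_add {i j : Fin n} (h : i ≠ j) (s t : R) :
    (el i j (s + t) : Matrix.SpecialLinearGroup (Fin n) R) = el i j s * el i j t := by
  simp only [el, dif_pos h]
  exact Matrix.SpecialLinearGroup.transvection_add h s t

lemma el_comm {i j k l : Fin n} (h : i ≠ j) (h' : k ≠ l) (hjk : j ≠ k) (hil : i ≠ l) (s t : R) :
    (el i j s * el k l t : Matrix.SpecialLinearGroup (Fin n) R) = el k l t * el i j s := by
  ext p q
  rw [mul_el_apply h', mul_el_apply h]
  simp only [el_apply h, el_apply h', Matrix.one_apply]
  grind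

lemma el_brk {i j k : Fin n} (h : i ≠ j) (h' : j ≠ k) (hik : i ≠ k) (s t : R) :
    (el i j s * el j k t : Matrix.SpecialLinearGroup (Fin n) R)
      = el i k (s * t) * el j k t * el i j s := by
  ext p q
  rw [mul_el_apply h', mul_el_apply h]
  simp only [mul_el_apply h', el_apply h, el_apply hik, Matrix.one_apply]
  grind

/-- identity outside J -/
def IdOut (J : Finset (Fin n)) (x : Matrix (Fin n) (Fin n) R) : Prop :=
  ∀ p q, (p ∉ J ∨ q ∉ J) → x p q = (1 : Matrix (Fin n) (Fin n) R) p q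

lemma IdOut.mul {J : Finset (Fin n)} {x y : Matrix (Fin n) (Fin n) R}
    (hx : IdOut J x) (hy : IdOut J y) : IdOut J (x * y) := by
  intro p q hpq
  rw [Matrix.mul_apply]
  rcases hpq with hp | hq
  · have : ∀ r, x p r * y r q = (1 : Matrix (Fin n) (Fin n) R) p r * y r q := by
      intro r; rw [hx p r (Or.inl hp)]
    simp only [this]
    rw [← Matrix.mul_apply, one_mul, hy p q (Or.inl hp)]
  · have : ∀ r, x p r * y r q = x p r * (1 : Matrix (Fin n) (Fin n) R) r q := by
      intro r; rw [hy r q (Or.inr hq)]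
    simp only [this]
    rw [← Matrix.mul_apply, mul_one, hx p q (Or.inr hq)]

lemma IdOut.one (J : Finset (Fin n)) : IdOut J (1 : Matrix (Fin n) (Fin n) R) :=
  fun _ _ _ => rfl

lemma IdOut.el {J : Finset (Fin n)} {i j : Fin n} (hi : i ∈ J) (hj : j ∈ J) (h : i ≠ j) (t : R) :
    IdOut J ((el i j t : Matrix.SpecialLinearGroup (Fin n) R) : Matrix (Fin n) (Fin n) R) := by
  intro p q hpq
  rw [el_apply h]
  rw [if_neg]
  · simp
  · rintro ⟨rfl, rfl⟩; tauto

/-- elementary subgroup on the index set `J` -/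
def EG (R : Type*) [CommRing R] (J : Finset (Fin n)) :
    Subgroup (Matrix.SpecialLinearGroup (Fin n) R) :=
  Subgroup.closure {g | ∃ i ∈ J, ∃ j ∈ J, i ≠ j ∧ ∃ t : R, g = el i j t}

lemma el_inv {i j : Fin n} (h : i ≠ j) (t : R) :
    (el i j t : Matrix.SpecialLinearGroup (Fin n) R)⁻¹ = el i j (-t) := by
  simp only [el, dif_pos h]
  exact Matrix.SpecialLinearGroup.transvection_inv h t

lemma el_mem_EG {J : Finset (Fin n)} {i j : Fin n} (hi : i ∈ J) (hj : j ∈ J) (h : i ≠ j) (t : R) :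
    el i j t ∈ EG R J := Subgroup.subset_closure ⟨i, hi, j, hj, h, t, rfl⟩

lemma EG_mono {J J' : Finset (Fin n)} (h : J ⊆ J') : EG R J ≤ EG R J' := by
  apply Subgroup.closure_mono
  rintro g ⟨i, hi, j, hj, hij, t, rfl⟩
  exact ⟨i, h hi, j, h hj, hij, t, rfl⟩

lemma EG_idOut {J : Finset (Fin n)} {g : Matrix.SpecialLinearGroup (Fin n) R} (hg : g ∈ EG R J) :
    IdOut J (g : Matrix (Fin n) (Fin n) R) := by
  induction hg using Subgroup.closure_induction_right with
  | one => exact IdOut.one J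
  | mul_right x hx y hy ih =>
    obtain ⟨i, hi, j, hj, hij, t, rfl⟩ := hy
    exact ih.mul (IdOut.el hi hj hij t)
  | mul_inv_cancel x hx y hy ih =>
    obtain ⟨i, hi, j, hj, hij, t, rfl⟩ := hy
    rw [el_inv hij]
    exact ih.mul (IdOut.el hi hj hij (-t))

end elem

section gen
variable {n : ℕ} {R : Type*} [EuclideanDomain R]

/-- unimodularity of row `o` -/
lemma row_unimod {R : Type*} [CommRing R] (x : Matrix.SpecialLinearGroup (Fin n) R) (o : Fin n) :
    ∑ q, x o q * (x⁻¹ : Matrix.SpecialLinearGroup (Fin n) R) q o = 1 := by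
  have : (x * x⁻¹ : Matrix.SpecialLinearGroup (Fin n) R) o o = 1 := by simp
  rwa [Matrix.SpecialLinearGroup.coe_mul, Matrix.mul_apply] at this

lemma exists_unit (J : Finset (Fin n)) (o : Fin n) (x : Matrix.SpecialLinearGroup (Fin n) R)
    (ho : o ∈ J)
    (hx : IdOut J (x : Matrix (Fin n) (Fin n) R)) :
    ∃ g ∈ EG R J, ∃ p ∈ J, IsUnit ((x * g) o p) := by
  classical
  let S : Set R := {d | d ≠ 0 ∧ ∃ g ∈ EG R J, ∃ p ∈ J, (x * g) o p = d}
  have supp : ∀ g ∈ EG R J, ∀ q, q ∉ J → (x * g) o q = 0 := by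
    intro g hg q hq
    have h1 := (hx.mul (EG_idOut hg)) o q (Or.inr hq)
    rw [Matrix.SpecialLinearGroup.coe_mul, h1, Matrix.one_apply_ne]
    rintro rfl; exact hq ho
  have hS : S.Nonempty := by
    by_contra hne
    rw [Set.not_nonempty_iff_eq_empty] at hne
    have hz : ∀ q, x o q = 0 := by
      intro q
      by_cases hq : q ∈ J
      · by_contra h0
        have : x o q ∈ S := ⟨h0, 1, one_mem _, q, hq, by rw [mul_one]⟩
        rw [hne] at this; exact this
      · have := supp 1 (one_mem _) q hq
        rwa [mul_one] at this
    have := row_unimod x o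
    simp [hz] at this
  have wf := EuclideanDomain.r_wellFounded (R := R)
  obtain ⟨hd0, g, hg, p, hp, hgp⟩ := wf.min_mem S hS
  set d := wf.min S hS with hd
  refine ⟨g, hg, p, hp, ?_⟩
  rw [hgp]
  have hdiv : ∀ q, d ∣ (x * g) o q := by
    intro q
    by_cases hqp : q = p
    · rw [hqp, hgp]
    by_cases hq : q ∈ J
    · by_contra hnd
      set r := (x * g) o q with hr
      have hrem : r % d ≠ 0 := by
        intro h; exact hnd ((EuclideanDomain.mod_eq_zero).mp h)
      have hin : r % d ∈ S := by
        refine ⟨hrem, g * el p q (-(r / d)), mul_mem hg (el_mem_EG hp hq (Ne.symm hqp) _), q, hq, ?_⟩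
        rw [← mul_assoc, mul_el_apply (Ne.symm hqp), if_pos rfl, hgp, ← hr]
        have := EuclideanDomain.div_add_mod r d
        linear_combination -this
      exact wf.not_lt_min S hin (EuclideanDomain.mod_lt r hd0)
    · rw [supp g hg q hq]; exact dvd_zero d
  have h1 := row_unimod (x * g) o
  refine isUnit_of_dvd_one ?_
  rw [← h1]
  exact Finset.dvd_sum fun q _ => Dvd.dvd.mul_right (hdiv q) _

lemma clear_row (J : Finset (Fin n)) (o : Fin n) (ho : o ∉ J) :
    ∀ (L : Finset (Fin n)), L ⊆ J → ∀ x : Matrix.SpecialLinearGroup (Fin n) R, x o o = 1 →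
    ∃ g ∈ EG R (insert o J), (x * g) o o = 1 ∧ (∀ q ∈ L, (x * g) o q = 0) := by
  intro L
  induction L using Finset.induction_on with
  | empty => intro _ x hx; exact ⟨1, one_mem _, by simpa using hx, by simp⟩
  | insert a L ha ih =>
    intro hL x hx
    obtain ⟨g, hg, h1, h2⟩ := ih (fun q hq => hL (Finset.mem_insert_of_mem hq)) x hx
    have haJ : a ∈ J := hL (Finset.mem_insert_self a L)
    have hoa : o ≠ a := by rintro rfl; exact ho haJ
    refine ⟨g * el o a (-((x * g) o a)), mul_mem hg
      (el_mem_EG (Finset.mem_insert_self _ _) (Finset.mem_insert_of_mem haJ) hoa _), ?_, ?_⟩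
    · rw [← mul_assoc, mul_el_apply hoa, if_neg hoa, h1, add_zero]
    · intro q hq
      rw [← mul_assoc, mul_el_apply hoa]
      rcases Finset.mem_insert.mp hq with rfl | hqL
      · rw [if_pos rfl, h1]; ring
      · rw [if_neg (by rintro rfl; exact ha hqL), h2 q hqL, add_zero]

lemma clear_col (J : Finset (Fin n)) (o : Fin n) (ho : o ∉ J) :
    ∀ (L : Finset (Fin n)), L ⊆ J → ∀ x : Matrix.SpecialLinearGroup (Fin n) R,
    (∀ q, x o q = (1 : Matrix (Fin n) (Fin n) R) o q) →
    ∃ g ∈ EG R (insert o J), (∀ q, (g * x) o q = (1 : Matrix (Fin n) (Fin n) R) o q) ∧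
      (∀ q ∈ L, (g * x) q o = 0) := by
  intro L
  induction L using Finset.induction_on with
  | empty => intro _ x hx; exact ⟨1, one_mem _, by simpa using hx, by simp⟩
  | insert a L ha ih =>
    intro hL x hx
    obtain ⟨g, hg, h1, h2⟩ := ih (fun q hq => hL (Finset.mem_insert_of_mem hq)) x hx
    have haJ : a ∈ J := hL (Finset.mem_insert_self a L)
    have hoa : o ≠ a := by rintro rfl; exact ho haJ
    refine ⟨el a o (-((g * x) a o)) * g, mul_mem 
      (el_mem_EG (Finset.mem_insert_of_mem haJ) (Finset.mem_insert_self _ _) hoa.symm _) hg, ?_, ?_⟩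
    · intro q
      rw [mul_assoc, el_mul_apply hoa.symm, if_neg hoa, h1, add_zero]
    · intro q hq
      rw [mul_assoc, el_mul_apply hoa.symm]
      rcases Finset.mem_insert.mp hq with rfl | hqL
      · rw [if_pos rfl, h1]; simp
      · rw [if_neg (by rintro rfl; exact ha hqL), h2 q hqL, add_zero]

lemma make_one (J : Finset (Fin n)) (o : Fin n) (ho : o ∉ J) (hJ : J.Nonempty)
    (x : Matrix.SpecialLinearGroup (Fin n) R)
    (hx : IdOut (insert o J) (x : Matrix (Fin n) (Fin n) R)) :
    ∃ g ∈ EG R (insert o J), (x * g) o o = 1 := by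
  have key : ∀ y : Matrix.SpecialLinearGroup (Fin n) R, ∀ p ∈ J, IsUnit (y o p) →
      ∃ g ∈ EG R (insert o J), (y * g) o o = 1 := by
    intro y p hp hu
    obtain ⟨u, hu⟩ := hu
    have hop : p ≠ o := by rintro rfl; exact ho hp
    refine ⟨el p o ((↑u⁻¹ : R) * (1 - y o o)), el_mem_EG (Finset.mem_insert_of_mem hp)
      (Finset.mem_insert_self _ _) hop _, ?_⟩
    rw [mul_el_apply hop, if_pos rfl, ← hu]
    have : (↑u⁻¹ : R) * ↑u = 1 := u.inv_mul
    linear_combination (1 - y o o) * this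
  obtain ⟨g, hg, p, hp, hu⟩ := exists_unit (insert o J) o x (Finset.mem_insert_self _ _) hx
  rcases Finset.mem_insert.mp hp with rfl | hp
  · obtain ⟨k, hk⟩ := hJ
    have hop : p ≠ k := by rintro rfl; exact ho hk
    obtain ⟨u, hu⟩ := hu
    have h1 : (x * (g * el p k ((↑u⁻¹ : R) * (1 - (x * g) p k)))) p k = 1 := by
      rw [← mul_assoc, mul_el_apply hop, if_pos rfl, ← hu]
      have : (↑u⁻¹ : R) * ↑u = 1 := u.inv_mul
      linear_combination (1 - (x * g) p k) * this
    obtain ⟨g', hg', h⟩ := key _ k hk (by rw [h1]; exact isUnit_one)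
    exact ⟨_, mul_mem (mul_mem hg (el_mem_EG (Finset.mem_insert_self _ _)
      (Finset.mem_insert_of_mem hk) hop _)) hg', by rw [← mul_assoc x]; exact h⟩
  · obtain ⟨g', hg', h⟩ := key _ p hp hu
    exact ⟨g * g', mul_mem hg hg', by rw [← mul_assoc x]; exact h⟩

lemma mem_EG_of_idOut (J : Finset (Fin n)) : ∀ x : Matrix.SpecialLinearGroup (Fin n) R,
    IdOut J (x : Matrix (Fin n) (Fin n) R) → x ∈ EG R J := by
  induction J using Finset.induction_on with
  | empty =>
    intro x hx
    have : x = 1 := by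
      ext p q
      rw [hx p q (Or.inl (by simp))]; rfl
    rw [this]; exact one_mem _
  | insert o J ho ih =>
    intro x hx
    rcases J.eq_empty_or_nonempty with rfl | hJ
    · have hx' : ∀ p q, (p ≠ o ∨ q ≠ o) → x p q = (1 : Matrix (Fin n) (Fin n) R) p q := by
        intro p q h; exact hx p q (by simpa using h)
      have hd : (x : Matrix (Fin n) (Fin n) R) = Matrix.diagonal (fun p => x p p) := by
        ext p q
        by_cases hpq : p = q
        · subst hpq; simp
        · rw [Matrix.diagonal_apply_ne _ hpq, hx' p q, Matrix.one_apply_ne hpq]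
          by_contra h; push Not at h; exact hpq (h.1.trans h.2.symm)
      have hdet : ∏ p, x p p = 1 := by
        rw [← Matrix.det_diagonal, ← hd, x.det_coe]
      rw [Finset.prod_eq_single o] at hdet
      · have : x = 1 := by
          ext p q
          by_cases h : p = o ∧ q = o
          · rw [h.1, h.2, hdet]; simp
          · rw [hx' p q (by tauto)]; rfl
        rw [this]; exact one_mem _
      · intro b _ hb
        rw [hx' b b (Or.inl hb)]; simp
      · simp
    · obtain ⟨g1, hg1, h1⟩ := make_one J o ho hJ x hx
      obtain ⟨g2, hg2, h2, h3⟩ := clear_row J o ho J subset_rfl (x * g1) h1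
      have hid : IdOut (insert o J) ((x * g1 * g2 : Matrix.SpecialLinearGroup (Fin n) R) :
          Matrix (Fin n) (Fin n) R) := (hx.mul (EG_idOut hg1)).mul (EG_idOut hg2)
      have hrow : ∀ q, (x * g1 * g2) o q = (1 : Matrix (Fin n) (Fin n) R) o q := by
        intro q
        by_cases hq : q = o
        · rw [hq, h2]; simp
        · by_cases hqJ : q ∈ J
          · rw [h3 q hqJ, Matrix.one_apply_ne (Ne.symm hq)]
          · exact hid o q (Or.inr (by simp [hq, hqJ]))
      obtain ⟨g3, hg3, h4, h5⟩ := clear_col J o ho J subset_rfl (x * g1 * g2) hrow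
      have hid2 : IdOut (insert o J) ((g3 * (x * g1 * g2) : Matrix.SpecialLinearGroup (Fin n) R) :
          Matrix (Fin n) (Fin n) R) := (EG_idOut hg3).mul hid
      have hfin : g3 * (x * g1 * g2) ∈ EG R J := by
        apply ih
        intro p q hpq
        by_cases hp : p = o
        · rw [hp]; exact h4 q
        by_cases hq : q = o
        · rw [hq]
          by_cases hpJ : p ∈ J
          · rw [h5 p hpJ, Matrix.one_apply_ne hp]
          · exact hid2 p o (Or.inl (by simp [hp, hpJ]))
        · exact hid2 p q (by simp [hp, hq]; exact hpq)
      have hfin' := EG_mono (Finset.subset_insert o J) hfin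
      have e1 : x = g3⁻¹ * (g3 * (x * g1 * g2)) * g2⁻¹ * g1⁻¹ := by group
      rw [e1]
      exact mul_mem (mul_mem (mul_mem (inv_mem hg3) hfin') (inv_mem hg2)) (inv_mem hg1)

lemma EG_univ : EG R (Finset.univ : Finset (Fin n)) = ⊤ := by
  rw [eq_top_iff]
  intro x _
  exact mem_EG_of_idOut _ x (fun p q h => by simp at h)

end gen

end SLP


namespace SLP

section steinberg
open scoped commutatorElement
variable {n : ℕ} {K : Type*} [Field K] {G : Type*} [Group G]

/-- Steinberg relations -/
structure Stein (x : Fin n → Fin n → K → G) : Prop where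
  add : ∀ i j, i ≠ j → ∀ s t, x i j (s + t) = x i j s * x i j t
  comm : ∀ i j k l, i ≠ j → k ≠ l → j ≠ k → i ≠ l → ∀ s t, x i j s * x k l t = x k l t * x i j s
  brk : ∀ i j k, i ≠ j → j ≠ k → i ≠ k → ∀ s t,
    x i j s * x j k t = x i k (s * t) * x j k t * x i j s

/-- Weyl element -/
def sw (x : Fin n → Fin n → K → G) (i j : Fin n) (s : K) : G :=
  x i j s * x j i (-s⁻¹) * x i j s

/-- torus element -/
def sh (x : Fin n → Fin n → K → G) (i j : Fin n) (s : K) : G :=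
  sw x i j s * sw x i j (-1)

/-- character -/
def chi (i j : Fin n) (s : K) (p : Fin n) : K := if p = i then s else if p = j then s⁻¹ else 1

lemma scc {a b : G} {f : K → G} {c c' : K} (h : SemiconjBy a b (f c)) (e : c' = c) :
    SemiconjBy a b (f c') := e ▸ h

namespace Stein
variable {x : Fin n → Fin n → K → G} (H : Stein x)
include H

lemma zero {i j : Fin n} (h : i ≠ j) : x i j 0 = 1 := by
  have := H.add i j h 0 0
  rw [add_zero] at this
  simpa using this

lemma neg {i j : Fin n} (h : i ≠ j) (t : K) : x i j (-t) = (x i j t)⁻¹ := by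
  rw [eq_inv_iff_mul_eq_one, ← H.add i j h, neg_add_cancel, H.zero h]

lemma sc1 {i j q : Fin n} (hij : i ≠ j) (hjq : j ≠ q) (hiq : i ≠ q) (s t : K) :
    SemiconjBy (x i j s) (x j q t) (x i q (s * t) * x j q t) := by
  unfold SemiconjBy
  exact H.brk i j q hij hjq hiq s t

lemma sc2 {i j q : Fin n} (hij : i ≠ j) (hjq : j ≠ q) (hiq : i ≠ q) (s t : K) :
    SemiconjBy (x i j s) (x q i t) (x q j (-(t * s)) * x q i t) := by
  unfold SemiconjBy
  rw [mul_assoc, H.brk q i j hiq.symm hij hjq.symm, H.neg hjq.symm]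
  group

lemma sc3 {i j k l : Fin n} (h1 : i ≠ j) (h2 : k ≠ l) (h3 : j ≠ k) (h4 : i ≠ l) (s t : K) :
    SemiconjBy (x i j s) (x k l t) (x k l t) := H.comm i j k l h1 h2 h3 h4 s t

lemma w_iq {i j q : Fin n} (hij : i ≠ j) (hjq : j ≠ q) (hiq : i ≠ q) {s : K} (hs : s ≠ 0) (t : K) :
    SemiconjBy (sw x i j s) (x i q t) (x j q (-t / s)) := by
  have a1 := H.sc3 hij hiq hij.symm hiq s t
  have a2 := H.sc1 hij.symm hiq hjq (-s⁻¹) t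
  have a3 := (H.sc1 hij hjq hiq s (-s⁻¹ * t)).mul_right a1
  have := (a3.mul_left a2).mul_left a1
  have e : x i q (s * (-s⁻¹ * t)) * x j q (-s⁻¹ * t) * x i q t = x j q (-t / s) := by
    rw [show s * (-s⁻¹ * t) = -t by field_simp, show -t / s = -s⁻¹ * t by field_simp]
    rw [mul_assoc, H.comm j q i q hjq hiq hiq.symm hjq, ← mul_assoc, H.neg hiq]; simp
  rw [e] at this
  exact this

lemma w_jq {i j q : Fin n} (hij : i ≠ j) (hjq : j ≠ q) (hiq : i ≠ q) {s : K} (hs : s ≠ 0) (t : K) :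
    SemiconjBy (sw x i j s) (x j q t) (x i q (s * t)) := by
  have a1 := H.sc1 hij hjq hiq s t
  have a2 := (H.sc1 hij.symm hiq hjq (-s⁻¹) (s * t)).mul_right
    (H.sc3 hij.symm hjq hij hjq (-s⁻¹) t)
  have e : x j q (-s⁻¹ * (s * t)) * x i q (s * t) * x j q t = x i q (s * t) := by
    rw [show -s⁻¹ * (s * t) = -t by field_simp]
    rw [mul_assoc, H.comm i q j q hiq hjq hjq.symm hiq, ← mul_assoc, H.neg hjq]; simp
  rw [e] at a2
  exact ((H.sc3 hij hiq hij.symm hiq s (s * t)).mul_left a2).mul_left a1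

lemma w_qi {i j q : Fin n} (hij : i ≠ j) (hjq : j ≠ q) (hiq : i ≠ q) {s : K} (hs : s ≠ 0) (t : K) :
    SemiconjBy (sw x i j s) (x q i t) (x q j (-(s * t))) := by
  have a1 := H.sc2 hij hjq hiq s t
  have a2 := (H.sc2 hij.symm hiq hjq (-s⁻¹) (-(t * s))).mul_right
    (H.sc3 hij.symm hiq.symm hiq hij.symm (-s⁻¹) t)
  have e : x q i (-(-(t * s) * -s⁻¹)) * x q j (-(t * s)) * x q i t = x q j (-(s * t)) := by
    rw [show (-(-(t * s) * -s⁻¹)) = -t by field_simp]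
    rw [mul_assoc, H.comm q j q i hjq.symm hiq.symm hjq hiq.symm, ← mul_assoc,
      H.neg hiq.symm, mul_comm t s]; simp
  rw [e] at a2
  exact ((H.sc3 hij hjq.symm hjq hij s _).mul_left a2).mul_left a1

lemma w_qj {i j q : Fin n} (hij : i ≠ j) (hjq : j ≠ q) (hiq : i ≠ q) {s : K} (hs : s ≠ 0) (t : K) :
    SemiconjBy (sw x i j s) (x q j t) (x q i (t / s)) := by
  have a1 := H.sc3 hij hjq.symm hjq hij s t
  have a2 := H.sc2 hij.symm hiq hjq (-s⁻¹) t
  have a3 := (H.sc2 hij hjq hiq s (-(t * -s⁻¹))).mul_right a1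
  have := (a3.mul_left a2).mul_left a1
  have e : x q j (-(-(t * -s⁻¹) * s)) * x q i (-(t * -s⁻¹)) * x q j t = x q i (t / s) := by
    rw [show (-(-(t * -s⁻¹) * s)) = -t by field_simp, show -(t * -s⁻¹) = t / s by field_simp]
    rw [mul_assoc, H.comm q i q j hiq.symm hjq.symm hiq hjq.symm, ← mul_assoc, H.neg hjq.symm]; simp
  rw [e] at this
  exact this

lemma w_pq {i j p q : Fin n} (hij : i ≠ j) (hpq : p ≠ q) (hip : i ≠ p) (hjp : j ≠ p)
    (hiq : i ≠ q) (hjq : j ≠ q) (s t : K) :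
    SemiconjBy (sw x i j s) (x p q t) (x p q t) := by
  have a1 := H.sc3 hij hpq hjp hiq s t
  exact (a1.mul_left (H.sc3 hij.symm hpq hip hjq (-s⁻¹) t)).mul_left a1

lemma eq_comm_elt {i j k : Fin n} (hij : i ≠ j) (hjk : j ≠ k) (hik : i ≠ k) (s t : K) :
    x i k (s * t) = x i j s * x j k t * (x i j s)⁻¹ * (x j k t)⁻¹ := by
  rw [H.brk i j k hij hjk hik]; group

lemma exists_third (hn : 3 ≤ n) (i j : Fin n) : ∃ q, j ≠ q ∧ i ≠ q := by
  have : (({i, j} : Finset (Fin n))ᶜ).Nonempty := by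
    rw [← Finset.card_pos, Finset.card_compl, Fintype.card_fin]
    have := Finset.card_le_two (a := i) (b := j)
    omega
  obtain ⟨q, hq⟩ := this
  simp at hq
  exact ⟨q, fun h => hq.2 h.symm, fun h => hq.1 h.symm⟩

lemma w_ij (hn : 3 ≤ n) {i j : Fin n} (hij : i ≠ j) {s : K} (hs : s ≠ 0) (t : K) :
    SemiconjBy (sw x i j s) (x i j t) (x j i (-t / s ^ 2)) := by
  obtain ⟨q, hjq, hiq⟩ := H.exists_third hn i j
  have e1 := H.eq_comm_elt hiq hjq.symm hij t 1
  have e2 := H.eq_comm_elt hjq hiq.symm hij.symm (-t / s) (1 / s)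
  rw [mul_one] at e1
  rw [show -t / s ^ 2 = -t / s * (1 / s) by field_simp, e1, e2]
  have a := H.w_iq hij hjq hiq hs t
  have b := H.w_qj hij hjq hiq hs 1
  exact ((a.mul_right b).mul_right a.inv_right).mul_right b.inv_right

lemma w_ji (hn : 3 ≤ n) {i j : Fin n} (hij : i ≠ j) {s : K} (hs : s ≠ 0) (t : K) :
    SemiconjBy (sw x i j s) (x j i t) (x i j (-(s ^ 2 * t))) := by
  obtain ⟨q, hjq, hiq⟩ := H.exists_third hn i j
  have e1 := H.eq_comm_elt hjq hiq.symm hij.symm t 1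
  have e2 := H.eq_comm_elt hiq hjq.symm hij (s * t) (-(s * 1))
  rw [mul_one] at e1
  rw [show -(s ^ 2 * t) = s * t * -(s * 1) by ring, e1, e2]
  have a := H.w_jq hij hjq hiq hs t
  have b := H.w_qi hij hjq hiq hs 1
  exact ((a.mul_right b).mul_right a.inv_right).mul_right b.inv_right

lemma w_neg {i j : Fin n} (hij : i ≠ j) (s : K) : sw x i j (-s) = (sw x i j s)⁻¹ := by
  unfold sw
  rw [H.neg hij, inv_neg, neg_neg, H.neg hij.symm]
  group

lemma h_eq {i j : Fin n} (hij : i ≠ j) (s : K) : sh x i j s = sw x i j s * (sw x i j 1)⁻¹ := by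
  rw [sh, H.w_neg hij]

lemma h_one {i j : Fin n} (hij : i ≠ j) : sh x i j 1 = 1 := by
  rw [H.h_eq hij, mul_inv_cancel]

lemma h_conj (hn : 3 ≤ n) {i j p q : Fin n} (hij : i ≠ j) (hpq : p ≠ q) {s : K} (hs : s ≠ 0) (t : K) :
    SemiconjBy (sh x i j s) (x p q t) (x p q (chi i j s p * (chi i j s q)⁻¹ * t)) := by
  have h1 : (-1 : K) ≠ 0 := by simp
  by_cases hpi : p = i
  · subst hpi
    by_cases hqj : q = j
    · subst hqj
      have := (H.w_ji hn hij hs _).mul_left (H.w_ij hn hij h1 t)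
      refine scc (f := x _ _) this ?_
      simp [chi, hij.symm]; left; ring
    · have := (H.w_jq hij (Ne.symm hqj) hpq hs _).mul_left (H.w_iq hij (Ne.symm hqj) hpq h1 t)
      refine scc (f := x _ _) this ?_
      simp [chi, hqj, hpq.symm]
  by_cases hpj : p = j
  · subst hpj
    by_cases hqi : q = i
    · subst hqi
      have := (H.w_ij hn hij hs _).mul_left (H.w_ji hn hij h1 t)
      refine scc (f := x _ _) this ?_
      simp [chi, hij.symm]; field_simp
    · have := (H.w_iq hij hpq (Ne.symm hqi) hs _).mul_left (H.w_jq hij hpq (Ne.symm hqi) h1 t)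
      refine scc (f := x _ _) this ?_
      simp [chi, hqi, hpi, hpq.symm]; field_simp
  by_cases hqi : q = i
  · subst hqi
    have := (H.w_qj hij (Ne.symm hpj) hpq.symm hs _).mul_left
      (H.w_qi hij (Ne.symm hpj) hpq.symm h1 t)
    refine scc (f := x _ _) this ?_
    simp [chi, hpi, hpj]; field_simp
  by_cases hqj : q = j
  · subst hqj
    have := (H.w_qi hij hpq.symm (Ne.symm hpi) hs _).mul_left
      (H.w_qj hij hpq.symm (Ne.symm hpi) h1 t)
    refine scc (f := x _ _) this ?_
    simp [chi, hqi, hpi, hpj]; ring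
  have := (H.w_pq hij hpq (Ne.symm hpi) (Ne.symm hpj) (Ne.symm hqi) (Ne.symm hqj) s _).mul_left
      (H.w_pq hij hpq (Ne.symm hpi) (Ne.symm hpj) (Ne.symm hqi) (Ne.symm hqj) (-1) t)
  refine scc (f := x _ _) this ?_
  simp [chi, hpi, hpj, hqi, hqj]

lemma h_w (hn : 3 ≤ n) {i j q : Fin n} (hij : i ≠ j) (hjq : j ≠ q) (hiq : i ≠ q)
    {s : K} (hs : s ≠ 0) (t : K) :
    SemiconjBy (sh x i j s) (sw x i q t) (sw x i q (s * t)) := by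
  have a := H.h_conj hn hij hiq hs t
  have b := H.h_conj hn hij hiq.symm hs (-t⁻¹)
  have e1 : chi i j s i * (chi i j s q)⁻¹ * t = s * t := by
    simp [chi, hiq.symm, hjq.symm]
  have e2 : chi i j s q * (chi i j s i)⁻¹ * -t⁻¹ = -(s * t)⁻¹ := by
    simp [chi, hiq.symm, hjq.symm]; ring
  rw [e1] at a
  rw [e2] at b
  exact (a.mul_right b).mul_right a

/-- the symbol -/
lemma symbol (hn : 3 ≤ n) {i j q : Fin n} (hij : i ≠ j) (hjq : j ≠ q) (hiq : i ≠ q)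
    {s : K} (hs : s ≠ 0) (t : K) :
    sh x i q (s * t) = ⁅sh x i j s, sh x i q t⁆ * sh x i q t * sh x i q s := by
  have a := H.h_w hn hij hjq hiq hs t
  have b := H.h_w hn hij hjq hiq hs 1
  rw [mul_one] at b
  have c := a.mul_right b.inv_right
  rw [← H.h_eq hiq] at c
  unfold SemiconjBy at c
  rw [commutatorElement_def, c, H.h_eq hiq (s * t), H.h_eq hiq s]
  group

lemma symbol_central (hn : 3 ≤ n) {i j k l : Fin n} (hij : i ≠ j) (hkl : k ≠ l)
    {s t : K} (hs : s ≠ 0) (ht : t ≠ 0) {p q : Fin n} (hpq : p ≠ q) (u : K) :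
    Commute ⁅sh x i j s, sh x k l t⁆ (x p q u) := by
  have hc : ∀ (i j : Fin n) (s : K), s ≠ 0 → ∀ p, chi i j s p ≠ 0 := by
    intro i j s hs p; unfold chi; split_ifs <;> simp [hs]
  have a := fun u => H.h_conj hn hij hpq hs u
  have b := fun u => H.h_conj hn hkl hpq ht u
  have a' : ∀ u, SemiconjBy (sh x i j s)⁻¹ (x p q u)
      (x p q ((chi i j s p * (chi i j s q)⁻¹)⁻¹ * u)) := by
    intro u
    have := (a ((chi i j s p * (chi i j s q)⁻¹)⁻¹ * u)).inv_symm_left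
    rwa [mul_inv_cancel_left₀ (mul_ne_zero (hc _ _ _ hs _) (inv_ne_zero (hc _ _ _ hs _)))] at this
  have b' : ∀ u, SemiconjBy (sh x k l t)⁻¹ (x p q u)
      (x p q ((chi k l t p * (chi k l t q)⁻¹)⁻¹ * u)) := by
    intro u
    have := (b ((chi k l t p * (chi k l t q)⁻¹)⁻¹ * u)).inv_symm_left
    rwa [mul_inv_cancel_left₀ (mul_ne_zero (hc _ _ _ ht _) (inv_ne_zero (hc _ _ _ ht _)))] at this
  have := (((a _).mul_left (b _)).mul_left (a' _)).mul_left (b' u)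
  have e : chi i j s p * (chi i j s q)⁻¹ * (chi k l t p * (chi k l t q)⁻¹ *
      ((chi i j s p * (chi i j s q)⁻¹)⁻¹ * ((chi k l t p * (chi k l t q)⁻¹)⁻¹ * u))) = u := by
    have h1 := hc i j s hs p
    have h2 := hc i j s hs q
    have h3 := hc k l t ht p
    have h4 := hc k l t ht q
    field_simp
  rw [e] at this
  exact this

lemma central_h {c : G} (hc : ∀ p q, p ≠ q → ∀ u, Commute c (x p q u)) {i j : Fin n} (hij : i ≠ j)
    (s : K) : Commute c (sh x i j s) := by
  have hw : ∀ s, Commute c (sw x i j s) := fun s =>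
    ((hc i j hij _).mul_right (hc j i hij.symm _)).mul_right (hc i j hij _)
  exact (hw _).mul_right (hw _)

omit H in
lemma comm_mul_left {a b c z : G} (hz : Commute z c) (hza : Commute z a)
    (hzb : Commute z b) (h1 : Commute ⁅b, c⁆ a) (h2 : Commute ⁅b, c⁆ c) :
    ⁅z * a * b, c⁆ = ⁅a, c⁆ * ⁅b, c⁆ := by
  have k1 : Commute z ⁅a, c⁆ := by
    rw [commutatorElement_def]
    exact ((hza.mul_right hz).mul_right hza.inv_right).mul_right hz.inv_right
  have k2 : Commute z ⁅b, c⁆ := by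
    rw [commutatorElement_def]
    exact ((hzb.mul_right hz).mul_right hzb.inv_right).mul_right hz.inv_right
  have k3 : Commute ⁅b, c⁆ ⁅a, c⁆ := by
    rw [commutatorElement_def a c]
    exact ((h1.mul_right h2).mul_right h1.inv_right).mul_right h2.inv_right
  have e1 : ⁅z * a * b, c⁆ = z * (a * ⁅b, c⁆ * a⁻¹) * ⁅a, c⁆ * (c * z⁻¹ * c⁻¹) := by
    simp only [commutatorElement_def]; group
  have e2 : c * z⁻¹ * c⁻¹ = z⁻¹ := by
    rw [← (hz.inv_left).eq]; group
  rw [e1, e2, ← h1.eq, mul_inv_cancel_right]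
  have e3 : z * ⁅b, c⁆ * ⁅a, c⁆ = ⁅b, c⁆ * ⁅a, c⁆ * z := by
    rw [k2.eq, mul_assoc, k1.eq, mul_assoc]
  rw [e3, mul_inv_cancel_right, k3.eq]

lemma symb_mul (hn : 3 ≤ n) {i j q : Fin n} (hij : i ≠ j) (hjq : j ≠ q) (hiq : i ≠ q)
    {s s' t : K} (hs : s ≠ 0) (hs' : s' ≠ 0) (ht : t ≠ 0) :
    ⁅sh x i j (s * s'), sh x i q t⁆ = ⁅sh x i j s', sh x i q t⁆ * ⁅sh x i j s, sh x i q t⁆ := by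
  rw [H.symbol hn hiq hjq.symm hij hs s']
  have z := fun {p q : Fin n} (hpq : p ≠ q) => H.symbol_central hn hiq hij hs hs' hpq
  have c := fun {p q' : Fin n} (hpq : p ≠ q') => H.symbol_central hn hij hiq hs ht hpq
  exact comm_mul_left (H.central_h (fun p q h => z h) hiq t)
    (H.central_h (fun p q h => z h) hij s') (H.central_h (fun p q h => z h) hij s)
    (H.central_h (fun p q h => c h) hij s') (H.central_h (fun p q h => c h) hiq t)

lemma symb_pow (hn : 3 ≤ n) {i j q : Fin n} (hij : i ≠ j) (hjq : j ≠ q) (hiq : i ≠ q)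
    {s t : K} (hs : s ≠ 0) (ht : t ≠ 0) (k : ℕ) :
    ⁅sh x i j (s ^ k), sh x i q t⁆ = ⁅sh x i j s, sh x i q t⁆ ^ k := by
  induction k with
  | zero => simp [H.h_one hij]
  | succ k ih =>
    rw [pow_succ, H.symb_mul hn hij hjq hiq (pow_ne_zero k hs) hs ht, ih, pow_succ']

lemma symb_root (hn : 3 ≤ n) [IsAlgClosed K] {i j q : Fin n} (hij : i ≠ j) (hjq : j ≠ q)
    (hiq : i ≠ q) {s ζ : K} (hs : s ≠ 0) {k : ℕ} (hk : 0 < k) (hζ : ζ ^ k = 1) :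
    Commute (sh x i j s) (sh x i q ζ) := by
  have hζ0 : ζ ≠ 0 := by
    rintro rfl
    rw [zero_pow hk.ne'] at hζ
    exact zero_ne_one hζ
  obtain ⟨r, hr⟩ := IsAlgClosed.exists_pow_nat_eq s hk
  have hr0 : r ≠ 0 := by
    rintro rfl
    rw [zero_pow hk.ne'] at hr
    exact hs hr.symm
  rw [← commutatorElement_eq_one_iff_commute, ← hr, H.symb_pow hn hij hjq hiq hr0 hζ0,
    ← commutatorElement_inv, inv_pow, ← H.symb_pow hn hiq hjq.symm hij hζ0 hr0, hζ, H.h_one hiq]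
  simp

lemma h_mul_of_commute (hn : 3 ≤ n) {i j q : Fin n} (hij : i ≠ j) (hjq : j ≠ q) (hiq : i ≠ q)
    {s : K} (hs : s ≠ 0) (t : K) (hc : Commute (sh x i j s) (sh x i q t)) :
    sh x i q (s * t) = sh x i q t * sh x i q s := by
  rw [H.symbol hn hij hjq hiq hs, commutatorElement_eq_one_iff_commute.mpr hc, one_mul]

/-- rank one identity -/
lemma rank_one (hn : 3 ≤ n) {i j : Fin n} (hij : i ≠ j)
    (hm : ∀ s t : K, s ≠ 0 → t ≠ 0 → sh x i j (s * t) = sh x i j t * sh x i j s)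
    (s t : K) (hb : 1 + s * t ≠ 0) :
    x i j s * x j i t = x j i (t / (1 + s * t)) * sh x i j (1 + s * t) * x i j (s / (1 + s * t)) := by
  by_cases ht : t = 0
  · subst ht
    simp [H.zero hij.symm, H.h_one hij]
  set b := 1 + s * t with hbd
  have W : ∀ u : K, u ≠ 0 → sw x i j u = x j i (-u⁻¹) * x i j u * x j i (-u⁻¹) := by
    intro u hu
    have a1 := H.w_ij hn hij hu u
    have a2 := H.w_ji hn hij hu (-u⁻¹)
    rw [show -u / u ^ 2 = -u⁻¹ by field_simp] at a1
    rw [show -(u ^ 2 * -u⁻¹) = u by field_simp] at a2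
    have a3 := (a1.mul_right a2).mul_right a1
    have a4 : SemiconjBy (sw x i j u) (sw x i j u) (x j i (-u⁻¹) * x i j u * x j i (-u⁻¹)) := a3
    have a5 := a4.eq
    exact mul_right_cancel a5
  have f1 : x j i t = x i j (1 / t) * sw x i j (-1 / t) * x i j (1 / t) := by
    rw [sw, show -(-1 / t)⁻¹ = t by field_simp, show -1 / t = -(1 / t) by ring, H.neg hij]
    group
  have f2 : x i j (b / t) = x j i (t / b) * sw x i j (b / t) * x j i (t / b) := by
    rw [W _ (div_ne_zero hb ht), show -(b / t)⁻¹ = -(t / b) by field_simp, H.neg hij.symm]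
    group
  have f3 : x j i (t / b) * sw x i j (-1 / t) = sw x i j (-1 / t) * x i j (-1 / (b * t)) := by
    have := H.w_ij hn hij (s := -1 / t) (by simp [ht]) (-1 / (b * t))
    rw [show -(-1 / (b * t)) / (-1 / t) ^ 2 = t / b by field_simp] at this
    exact this.eq.symm
  have f4 : sw x i j (b / t) * sw x i j (-1 / t) = sh x i j b := by
    rw [show -1 / t = -(1 / t) by ring, H.w_neg hij]
    have h1 := H.h_eq hij (b / t)
    have h2 := H.h_eq hij (1 / t)
    have h3 := hm (1 / t) b (by simp [ht]) hb
    rw [show 1 / t * b = b / t by ring] at h3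
    rw [h1, h2] at h3
    have h4 : sw x i j (b / t) * (sw x i j 1)⁻¹ = sh x i j b * sw x i j (1 / t) * (sw x i j 1)⁻¹ := by
      rw [h3]; group
    rw [mul_right_cancel h4]; group
  have g1 : x i j s * x i j (1 / t) = x i j (b / t) := by
    rw [← H.add i j hij]; congr 1; rw [hbd]; field_simp; ring
  have g2 : x i j (-1 / (b * t)) * x i j (1 / t) = x i j (s / b) := by
    rw [← H.add i j hij]; congr 1
    field_simp
    rw [hbd]; ring
  calc x i j s * x j i t = (x i j s * x i j (1 / t)) * sw x i j (-1 / t) * x i j (1 / t) := by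
        rw [f1]; group
    _ = x j i (t / b) * sw x i j (b / t) * (x j i (t / b) * sw x i j (-1 / t)) * x i j (1 / t) := by
        rw [g1, f2]; group
    _ = x j i (t / b) * (sw x i j (b / t) * sw x i j (-1 / t)) *
        (x i j (-1 / (b * t)) * x i j (1 / t)) := by rw [f3]; group
    _ = _ := by rw [f4, g2]

end Stein
end steinberg
end SLP


namespace SLP
section laurent
open Polynomial

/-- Laurent polynomial functions -/
def Lau (f : ℂ → ℂ) : Prop := ∃ (B : ℕ) (p : ℂ[X]), ∀ t, t ≠ 0 → t ^ B * f t = p.eval t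

lemma Lau.add {f g : ℂ → ℂ} (hf : Lau f) (hg : Lau g) : Lau (fun t => f t + g t) := by
  obtain ⟨B, p, hp⟩ := hf
  obtain ⟨C, q, hq⟩ := hg
  refine ⟨B + C, X ^ C * p + X ^ B * q, fun t ht => ?_⟩
  simp only [eval_add, eval_mul, eval_pow, eval_X, ← hp t ht, ← hq t ht]
  ring

lemma Lau.mul {f g : ℂ → ℂ} (hf : Lau f) (hg : Lau g) : Lau (fun t => f t * g t) := by
  obtain ⟨B, p, hp⟩ := hf
  obtain ⟨C, q, hq⟩ := hg
  refine ⟨B + C, p * q, fun t ht => ?_⟩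
  simp only [eval_mul, ← hp t ht, ← hq t ht]
  ring

lemma Lau.const (c : ℂ) : Lau (fun _ => c) := ⟨0, C c, fun t _ => by simp⟩
lemma Lau.id : Lau (fun t => t) := ⟨0, X, fun t _ => by simp⟩
lemma Lau.ninv : Lau (fun t => -t⁻¹) := ⟨1, -1, fun t ht => by simp [ht]⟩

lemma Lau.comp_poly {g : ℂ → ℂ} (hg : Lau g) (p : ℂ[X]) : Lau (fun t => p.eval (g t)) := by
  induction p using Polynomial.induction_on' with
  | add p q hp hq => simpa using hp.add hq
  | monomial k a =>
    induction k with
    | zero => simpa using Lau.const a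
    | succ k ih =>
      have := ih.mul hg
      simpa [eval_monomial, pow_succ, mul_assoc] using this

lemma Lau.sum {ι : Type*} (s : Finset ι) {f : ι → ℂ → ℂ} (hf : ∀ i, Lau (f i)) :
    Lau (fun t => ∑ i ∈ s, f i t) := by
  classical
  induction s using Finset.induction_on with
  | empty => simpa using Lau.const 0
  | insert a s ha ih =>
    simp only [Finset.sum_insert ha]
    exact (hf a).add ih

lemma Lau.eq_zero {f : ℂ → ℂ} (hf : Lau f) {S : Set ℂ} (hS : S.Infinite)
    (h : ∀ t ∈ S, t ≠ 0 ∧ f t = 0) (t : ℂ) (ht : t ≠ 0) : f t = 0 := by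
  obtain ⟨B, p, hp⟩ := hf
  have : p = 0 := by
    apply Polynomial.eq_zero_of_infinite_isRoot
    refine hS.mono fun u hu => ?_
    have := hp u (h u hu).1
    rw [(h u hu).2, mul_zero] at this
    exact this.symm
  have h2 := hp t ht
  rw [this] at h2
  simpa [ht] using h2

/-- matrices with Laurent entries -/
def MLau {N : ℕ} (f : ℂ → GL (Fin N) ℂ) : Prop :=
  ∀ a b, Lau (fun t => (f t : Matrix (Fin N) (Fin N) ℂ) a b)

lemma MLau.mul {N : ℕ} {f g : ℂ → GL (Fin N) ℂ} (hf : MLau f) (hg : MLau g) :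
    MLau (fun t => f t * g t) := by
  intro a b
  simp only [Units.val_mul, Matrix.mul_apply]
  exact Lau.sum _ fun c => (hf a c).mul (hg c b)

lemma MLau.const {N : ℕ} (g : GL (Fin N) ℂ) : MLau (fun _ => g) := fun a b => Lau.const _

lemma MLau.eq {N : ℕ} {f g : ℂ → GL (Fin N) ℂ} (hf : MLau f) (hg : MLau g) {S : Set ℂ}
    (hS : S.Infinite) (h : ∀ t ∈ S, t ≠ 0 ∧ f t = g t) (t : ℂ) (ht : t ≠ 0) : f t = g t := by
  ext a b
  have := ((hf a b).add ((Lau.const (-1)).mul (hg a b))).eq_zero hS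
    (fun t ht => ⟨(h t ht).1, by rw [(h t ht).2]; ring⟩) t ht
  linear_combination this

lemma rootsInf : {ζ : ℂ | ∃ k : ℕ, 0 < k ∧ ζ ^ k = 1}.Infinite := by
  refine Set.infinite_of_injective_forall_mem
    (f := fun k : ℕ => Complex.exp (2 * Real.pi * Complex.I / ((k + 1 : ℕ) : ℂ))) ?_ ?_
  · intro a b hab
    have h1 := (Complex.isPrimitiveRoot_exp (a + 1) (by omega)).eq_orderOf
    have h2 := (Complex.isPrimitiveRoot_exp (b + 1) (by omega)).eq_orderOf
    dsimp only at hab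
    rw [hab, ← h2] at h1
    omega
  · intro k
    exact ⟨k + 1, by omega, (Complex.isPrimitiveRoot_exp (k + 1) (by omega)).pow_eq_one⟩

lemma map_sw {n : ℕ} {G G' : Type*} [Group G] [Group G'] (φ : G →* G')
    (x : Fin n → Fin n → ℂ → G) (i j : Fin n) (s : ℂ) :
    φ (sw x i j s) = sw (fun i j t => φ (x i j t)) i j s := by
  simp [sw]

lemma map_sh {n : ℕ} {G G' : Type*} [Group G] [Group G'] (φ : G →* G')
    (x : Fin n → Fin n → ℂ → G) (i j : Fin n) (s : ℂ) :
    φ (sh x i j s) = sh (fun i j t => φ (x i j t)) i j s := by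
  simp [sh, map_sw]

/-- polynomial family -/
def PolyFam {n N : ℕ} (x : Fin n → Fin n → ℂ → GL (Fin N) ℂ) : Prop :=
  ∀ i j, i ≠ j → ∀ a b, ∃ p : ℂ[X], ∀ t, (x i j t : Matrix (Fin N) (Fin N) ℂ) a b = p.eval t

lemma PolyFam.hmul {n N : ℕ} (hn : 3 ≤ n) {x : Fin n → Fin n → ℂ → GL (Fin N) ℂ}
    (H : Stein x) (hx : PolyFam x) {i q : Fin n} (hiq : i ≠ q) (s t : ℂ) (hs : s ≠ 0)
    (ht : t ≠ 0) : sh x i q (s * t) = sh x i q t * sh x i q s := by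
  obtain ⟨j, hjq, hij⟩ : ∃ j, j ≠ q ∧ i ≠ j := by
    obtain ⟨j, h1, h2⟩ := H.exists_third hn i q
    exact ⟨j, h1.symm, h2⟩
  apply H.h_mul_of_commute hn hij hjq hiq hs
  have hl : MLau (fun t => sh x i q t) := by
    have h1 : MLau (fun t => x i q t) := by
      intro a b
      obtain ⟨p, hp⟩ := hx i q hiq a b
      simp only [hp]
      exact Lau.id.comp_poly p
    have h2 : MLau (fun t => x q i (-t⁻¹)) := by
      intro a b
      obtain ⟨p, hp⟩ := hx q i hiq.symm a b
      simp only [hp]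
      exact Lau.ninv.comp_poly p
    exact ((h1.mul h2).mul h1).mul (MLau.const _)
  refine MLau.eq ((MLau.const (sh x i j s)).mul hl) (hl.mul (MLau.const (sh x i j s)))
    rootsInf ?_ t ht
  rintro ζ ⟨k, hk, hζ⟩
  refine ⟨?_, H.symb_root hn hij hjq hiq hs hk hζ⟩
  rintro rfl
  rw [zero_pow hk.ne'] at hζ
  exact zero_ne_one hζ

lemma el_stein {n : ℕ} : Stein (fun i j (t : ℂ) => (el i j t : SpecialLinearGroup (Fin n) ℂ)) where
  add i j h s t := el_add h s t
  comm i j k l h1 h2 h3 h4 s t := el_comm h1 h2 h3 h4 s t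
  brk i j k h1 h2 h3 s t := el_brk h1 h2 h3 s t

lemma Stein.map {n : ℕ} {G G' : Type*} [Group G] [Group G'] (φ : G →* G')
    {x : Fin n → Fin n → ℂ → G} (H : Stein x) : Stein (fun i j t => φ (x i j t)) where
  add i j h s t := by rw [H.add i j h, map_mul]
  comm i j k l h1 h2 h3 h4 s t := by rw [← map_mul, H.comm i j k l h1 h2 h3 h4, map_mul]
  brk i j k h1 h2 h3 s t := by rw [← map_mul, H.brk i j k h1 h2 h3, map_mul, map_mul]

lemma el_hmul {n : ℕ} (hn : 3 ≤ n) {i q : Fin n} (hiq : i ≠ q) (s t : ℂ) (hs : s ≠ 0)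
    (ht : t ≠ 0) : sh (fun i j (t : ℂ) => (el i j t : SpecialLinearGroup (Fin n) ℂ)) i q (s * t) =
      sh (fun i j (t : ℂ) => el i j t) i q t * sh (fun i j (t : ℂ) => el i j t) i q s := by
  have hinj : Function.Injective (SpecialLinearGroup.toGL (n := Fin n) (R := ℂ)) :=
    SpecialLinearGroup.toGL_injective
  apply hinj
  rw [map_mul, map_sh, map_sh, map_sh]
  refine PolyFam.hmul hn (el_stein.map _) ?_ hiq s t hs ht
  intro i j h a b
  refine ⟨C ((1 : Matrix (Fin n) (Fin n) ℂ) a b) + if a = i ∧ b = j then X else 0, fun t => ?_⟩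
  have := el_apply h t a b
  simp only [eval_add, eval_C]
  refine Eq.trans ?_ (this.trans ?_)
  · rfl
  · split_ifs <;> simp

variable {n N : ℕ}

/-- pair family -/
def pr (x : Fin n → Fin n → ℂ → GL (Fin N) ℂ) (i j : Fin n) (t : ℂ) :
    SpecialLinearGroup (Fin n) ℂ × GL (Fin N) ℂ := (el i j t, x i j t)

lemma pr_stein {x : Fin n → Fin n → ℂ → GL (Fin N) ℂ} (H : Stein x) : Stein (pr x) where
  add i j h s t := Prod.ext (el_add h s t) (H.add i j h s t)
  comm i j k l h1 h2 h3 h4 s t := Prod.ext (el_comm h1 h2 h3 h4 s t) (H.comm i j k l h1 h2 h3 h4 s t)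
  brk i j k h1 h2 h3 s t := Prod.ext (el_brk h1 h2 h3 s t) (H.brk i j k h1 h2 h3 s t)

lemma pr_sh_fst (x : Fin n → Fin n → ℂ → GL (Fin N) ℂ) (i j : Fin n) (s : ℂ) :
    (sh (pr x) i j s).1 = sh (fun i j (t : ℂ) => el i j t) i j s :=
  map_sh (MonoidHom.fst _ _) (pr x) i j s
lemma pr_sh_snd (x : Fin n → Fin n → ℂ → GL (Fin N) ℂ) (i j : Fin n) (s : ℂ) :
    (sh (pr x) i j s).2 = sh x i j s :=
  map_sh (MonoidHom.snd _ _) (pr x) i j s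

lemma pr_hmul (hn : 3 ≤ n) {x : Fin n → Fin n → ℂ → GL (Fin N) ℂ}
    (H : Stein x) (hx : PolyFam x) {i q : Fin n} (hiq : i ≠ q) (s t : ℂ) (hs : s ≠ 0)
    (ht : t ≠ 0) : sh (pr x) i q (s * t) = sh (pr x) i q t * sh (pr x) i q s := by
  apply Prod.ext
  · simp only [Prod.fst_mul, pr_sh_fst]
    exact el_hmul hn hiq s t hs ht
  · simp only [Prod.snd_mul, pr_sh_snd]
    exact hx.hmul hn H hiq s t hs ht

end laurent
end SLP


namespace SLP
section reg
variable {Y : Type*} (A : Subalgebra ℂ (Y → ℂ))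

/-- matrix valued map with entries in `A` -/
def MR {m : ℕ} (φ : Y → Matrix (Fin m) (Fin m) ℂ) : Prop := ∀ a b, (fun y => φ y a b) ∈ A

variable {A}

lemma mem_const (c : ℂ) : (fun _ : Y => c) ∈ A := A.algebraMap_mem c

lemma mem_add {f g : Y → ℂ} (hf : f ∈ A) (hg : g ∈ A) : (fun y => f y + g y) ∈ A := A.add_mem hf hg
lemma mem_mul {f g : Y → ℂ} (hf : f ∈ A) (hg : g ∈ A) : (fun y => f y * g y) ∈ A := A.mul_mem hf hg

lemma mem_sum {ι : Type*} (s : Finset ι) {f : ι → Y → ℂ} (hf : ∀ i ∈ s, f i ∈ A) :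
    (fun y => ∑ i ∈ s, f i y) ∈ A := by
  have := A.sum_mem hf
  convert this using 1
  ext y; simp

lemma mem_prod {ι : Type*} (s : Finset ι) {f : ι → Y → ℂ} (hf : ∀ i ∈ s, f i ∈ A) :
    (fun y => ∏ i ∈ s, f i y) ∈ A := by
  have := A.prod_mem hf
  convert this using 1
  ext y; simp

lemma mem_poly {r : Y → ℂ} (hr : r ∈ A) (p : Polynomial ℂ) : (fun y => p.eval (r y)) ∈ A := by
  induction p using Polynomial.induction_on' with
  | add p q hp hq => simpa using mem_add hp hq
  | monomial k a =>
    simp only [Polynomial.eval_monomial]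
    exact mem_mul (mem_const a) (A.pow_mem hr k)

lemma mem_mvpoly {σ : Type*} {r : σ → Y → ℂ} (hr : ∀ i, r i ∈ A) (p : MvPolynomial σ ℂ) :
    (fun y => MvPolynomial.eval (fun i => r i y) p) ∈ A := by
  induction p using MvPolynomial.induction_on with
  | C a => simpa using mem_const a
  | add p q hp hq => simpa using mem_add hp hq
  | mul_X p i hp => simpa using mem_mul hp (hr i)

lemma MR.mul {m : ℕ} {φ ψ : Y → Matrix (Fin m) (Fin m) ℂ} (h1 : MR A φ) (h2 : MR A ψ) :
    MR A (fun y => φ y * ψ y) := by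
  intro a b
  simp only [Matrix.mul_apply]
  exact mem_sum _ fun c _ => mem_mul (h1 a c) (h2 c b)

lemma MR.const {m : ℕ} (φ : Matrix (Fin m) (Fin m) ℂ) : MR A (fun _ => φ) := fun _ _ => mem_const _

lemma MR.det {m : ℕ} {φ : Y → Matrix (Fin m) (Fin m) ℂ} (h : MR A φ) :
    (fun y => (φ y).det) ∈ A := by
  simp only [Matrix.det_apply']
  exact mem_sum _ fun σ _ => mem_mul (mem_const _) (mem_prod _ fun i _ => h _ _)

lemma MR.adj {m : ℕ} {φ : Y → Matrix (Fin m) (Fin m) ℂ} (h : MR A φ) :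
    MR A (fun y => (φ y).adjugate) := by
  intro i j
  simp only [Matrix.adjugate_apply]
  apply MR.det
  intro a b
  simp only [Matrix.updateRow_apply]
  split_ifs
  · exact mem_const _
  · exact h a b

variable {n N : ℕ}
/-- group valued -/
def GR (A : Subalgebra ℂ (Y → ℂ)) (φ : Y → SpecialLinearGroup (Fin n) ℂ × GL (Fin N) ℂ) : Prop :=
  MR A (fun y => ((φ y).1 : Matrix (Fin n) (Fin n) ℂ)) ∧
  MR A (fun y => ((φ y).2 : Matrix (Fin N) (Fin N) ℂ))

lemma GR.mul {φ ψ : Y → SpecialLinearGroup (Fin n) ℂ × GL (Fin N) ℂ} (h1 : GR A φ) (h2 : GR A ψ) :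
    GR A (fun y => φ y * ψ y) := by
  constructor
  · simpa using h1.1.mul h2.1
  · simpa using h1.2.mul h2.2

lemma GR.const (g : SpecialLinearGroup (Fin n) ℂ × GL (Fin N) ℂ) : GR A (fun _ => g) :=
  ⟨MR.const _, MR.const _⟩

lemma GR.pr {x : Fin n → Fin n → ℂ → GL (Fin N) ℂ} (hx : PolyFam x) {i j : Fin n} (h : i ≠ j)
    {r : Y → ℂ} (hr : r ∈ A) : GR A (fun y => pr x i j (r y)) := by
  constructor
  · intro a b
    simp only [SLP.pr, el_apply h]
    apply mem_add (mem_const _)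
    split_ifs
    · exact hr
    · exact mem_const _
  · intro a b
    obtain ⟨p, hp⟩ := hx i j h a b
    simp only [SLP.pr, hp]
    exact mem_poly hr p

lemma GR.list {ι : Type*} (l : List ι)
    {φ : ι → Y → SpecialLinearGroup (Fin n) ℂ × GL (Fin N) ℂ} (h : ∀ i, GR A (φ i)) :
    GR A (fun y => (l.map fun i => φ i y).prod) := by
  induction l with
  | nil => exact GR.const 1
  | cons a l ih => simpa using (h a).mul ih

end reg

section lprod
variable {n : ℕ} {G : Type*} [Group G]

/-- ordered product -/
def Lp (g : Fin n → ℂ → G) (v : Fin n → ℂ) : G := ((List.finRange n).map fun i => g i (v i)).prod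

lemma lp_aux {ι : Type*} (l : List ι) (a b : ι → G) (h : ∀ i j, Commute (a i) (b j)) :
    (l.map fun i => a i * b i).prod = (l.map a).prod * (l.map b).prod := by
  induction l with
  | nil => simp
  | cons i l ih =>
    have : Commute (l.map a).prod (b i) := by
      apply Commute.list_prod_left
      intro z hz
      obtain ⟨j, -, rfl⟩ := List.mem_map.mp hz
      exact h j i
    simp only [List.map_cons, List.prod_cons, ih]
    calc _ = a i * (b i * (l.map a).prod) * (l.map b).prod := by group
      _ = _ := by rw [← this.eq]; group

/-- a commuting family of one parameter groups -/
structure CF (g : Fin n → ℂ → G) : Prop where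
  add : ∀ i s t, g i (s + t) = g i s * g i t
  comm : ∀ i j s t, Commute (g i s) (g j t)

variable {g : Fin n → ℂ → G} (H : CF g)
include H

lemma CF.zero (i : Fin n) : g i 0 = 1 := by
  have := H.add i 0 0
  rw [add_zero] at this
  simpa using this

lemma CF.neg (i : Fin n) (t : ℂ) : g i (-t) = (g i t)⁻¹ := by
  rw [eq_inv_iff_mul_eq_one, ← H.add, neg_add_cancel, H.zero]

lemma CF.lp_add (v w : Fin n → ℂ) : Lp g (v + w) = Lp g v * Lp g w := by
  unfold Lp
  rw [← lp_aux _ _ _ (fun i j => H.comm i j _ _)]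
  simp [H.add]

lemma CF.lp_zero : Lp g 0 = 1 := by
  unfold Lp
  simp [H.zero]

lemma CF.lp_neg (v : Fin n → ℂ) : Lp g (-v) = (Lp g v)⁻¹ := by
  rw [eq_inv_iff_mul_eq_one, ← H.lp_add, neg_add_cancel, H.lp_zero]

lemma CF.lp_single (i : Fin n) (t : ℂ) : Lp g (Pi.single i t) = g i t := by
  unfold Lp
  rw [List.prod_map_eq_pow_single i]
  · rw [List.count_eq_one_of_mem (List.nodup_finRange n) (List.mem_finRange i)]
    simp
  · intro j hj _
    simp [hj, H.zero]

lemma CF.exists_lp {u : G} (hu : u ∈ Subgroup.closure {z | ∃ i t, z = g i t}) :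
    ∃ v, u = Lp g v := by
  induction hu using Subgroup.closure_induction with
  | mem z hz => obtain ⟨i, t, rfl⟩ := hz; exact ⟨_, (H.lp_single i t).symm⟩
  | one => exact ⟨0, H.lp_zero.symm⟩
  | mul a b _ _ ha hb =>
    obtain ⟨v, rfl⟩ := ha
    obtain ⟨w, rfl⟩ := hb
    exact ⟨_, (H.lp_add v w).symm⟩
  | inv a _ ha =>
    obtain ⟨v, rfl⟩ := ha
    exact ⟨_, (H.lp_neg v).symm⟩

omit H in
lemma lp_mem {S : Subgroup G} (h : ∀ i t, g i t ∈ S) (v : Fin n → ℂ) : Lp g v ∈ S := by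
  apply Subgroup.list_prod_mem
  intro z hz
  obtain ⟨j, -, rfl⟩ := List.mem_map.mp hz
  exact h _ _

end lprod

section clos
variable {G : Type*} [Group G]

lemma clos_ind {S : Set G} (hS : ∀ s ∈ S, s⁻¹ ∈ S) {p : G → Prop} (one : p 1)
    (mul : ∀ y ∈ Subgroup.closure S, ∀ s ∈ S, p y → p (y * s)) {y : G}
    (hy : y ∈ Subgroup.closure S) : p y := by
  induction hy using Subgroup.closure_induction_right with
  | one => exact one
  | mul_right y hy s hs ih => exact mul y hy s hs ih
  | mul_inv_cancel y hy s hs ih => exact mul y hy _ (hS s hs) ih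

lemma norm_lem {S T : Set G} (hS : ∀ s ∈ S, s⁻¹ ∈ S)
    (h : ∀ g ∈ S, ∀ s ∈ T, g * s * g⁻¹ ∈ Subgroup.closure T) {g u : G}
    (hg : g ∈ Subgroup.closure S) (hu : u ∈ Subgroup.closure T) :
    g * u * g⁻¹ ∈ Subgroup.closure T := by
  have h' : ∀ g ∈ S, ∀ u ∈ Subgroup.closure T, g * u * g⁻¹ ∈ Subgroup.closure T := by
    intro g hg u hu
    induction hu using Subgroup.closure_induction with
    | mem s hs => exact h g hg s hs
    | one => simp
    | mul a b _ _ ha hb =>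
      have := Subgroup.mul_mem _ ha hb
      convert this using 1; group
    | inv a _ ha =>
      have := Subgroup.inv_mem _ ha
      convert this using 1; group
  revert u
  refine clos_ind (p := fun g => ∀ {u}, u ∈ Subgroup.closure T → g * u * g⁻¹ ∈ Subgroup.closure T)
    hS ?_ ?_ hg
  · intro u hu; simpa using hu
  · intro y _ s hs ih u hu
    have := ih (h' s hs u hu)
    convert this using 1; group

end clos
end SLP


namespace SLP
section cell
variable {n : ℕ} {G : Type*} [Group G]

/-- Levi -/
def MJ (x : Fin n → Fin n → ℂ → G) (J : Finset (Fin n)) : Subgroup G :=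
  Subgroup.closure {z | ∃ i j t, i ∈ J ∧ j ∈ J ∧ i ≠ j ∧ z = x i j t}
/-- row unipotent -/
def UJ (x : Fin n → Fin n → ℂ → G) (o : Fin n) (J : Finset (Fin n)) : Subgroup G :=
  Subgroup.closure {z | ∃ j t, j ∈ J ∧ z = x o j t}
/-- column unipotent -/
def VJ (x : Fin n → Fin n → ℂ → G) (o : Fin n) (J : Finset (Fin n)) : Subgroup G :=
  Subgroup.closure {z | ∃ i t, i ∈ J ∧ z = x i o t}
/-- big cell -/
def Cell (x : Fin n → Fin n → ℂ → G) (o k : Fin n) (J : Finset (Fin n)) : Set G :=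
  {y | ∃ f ∈ VJ x o J, ∃ a : ℂ, a ≠ 0 ∧ ∃ m ∈ MJ x J, ∃ u ∈ UJ x o J, y = f * sh x o k a * m * u}

lemma mem_MJ {x : Fin n → Fin n → ℂ → G} {J : Finset (Fin n)} {i j : Fin n} (hi : i ∈ J)
    (hj : j ∈ J) (h : i ≠ j) (t : ℂ) : x i j t ∈ MJ x J :=
  Subgroup.subset_closure ⟨i, j, t, hi, hj, h, rfl⟩
lemma mem_UJ {x : Fin n → Fin n → ℂ → G} {o : Fin n} {J : Finset (Fin n)} {j : Fin n}
    (hj : j ∈ J) (t : ℂ) : x o j t ∈ UJ x o J :=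
  Subgroup.subset_closure ⟨j, t, hj, rfl⟩
lemma mem_VJ {x : Fin n → Fin n → ℂ → G} {o : Fin n} {J : Finset (Fin n)} {j : Fin n}
    (hj : j ∈ J) (t : ℂ) : x j o t ∈ VJ x o J :=
  Subgroup.subset_closure ⟨j, t, hj, rfl⟩

lemma sc_conj {a b c : G} (h : SemiconjBy a b c) : a * b * a⁻¹ = c := by
  rw [h.eq]; group

variable {x : Fin n → Fin n → ℂ → G} (H : Stein x) {J : Finset (Fin n)} {o k : Fin n}
include H

lemma MJ_inv : ∀ s ∈ {z | ∃ i j t, i ∈ J ∧ j ∈ J ∧ i ≠ j ∧ z = x i j t},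
    s⁻¹ ∈ {z | ∃ i j t, i ∈ J ∧ j ∈ J ∧ i ≠ j ∧ z = x i j t} := by
  rintro _ ⟨i, j, t, hi, hj, h, rfl⟩
  exact ⟨i, j, -t, hi, hj, h, (H.neg h t).symm⟩
lemma UJ_inv (ho : o ∉ J) : ∀ s ∈ {z | ∃ j t, j ∈ J ∧ z = x o j t},
    s⁻¹ ∈ {z | ∃ j t, j ∈ J ∧ z = x o j t} := by
  rintro _ ⟨j, t, hj, rfl⟩
  have hjo : o ≠ j := fun h => ho (h ▸ hj)
  exact ⟨j, -t, hj, (H.neg hjo t).symm⟩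

lemma M_norm_U (ho : o ∉ J) {m u : G} (hm : m ∈ MJ x J) (hu : u ∈ UJ x o J) :
    m * u * m⁻¹ ∈ UJ x o J := by
  refine norm_lem (MJ_inv H) ?_ hm hu
  rintro _ ⟨a, b, s, ha, hb, hab, rfl⟩ _ ⟨j, t, hj, rfl⟩
  have hao : o ≠ a := fun h => ho (h ▸ ha)
  have hbo : o ≠ b := fun h => ho (h ▸ hb)
  have hjo : o ≠ j := fun h => ho (h ▸ hj)
  by_cases haj : j = a
  · subst haj
    rw [sc_conj (H.sc2 hab hbo.symm hao.symm s t)]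
    exact Subgroup.mul_mem _ (mem_UJ hb _) (mem_UJ hj _)
  · rw [sc_conj (H.sc3 hab hjo hbo.symm (Ne.symm haj) s t)]
    exact mem_UJ hj _

lemma M_norm_V (ho : o ∉ J) {m u : G} (hm : m ∈ MJ x J) (hu : u ∈ VJ x o J) :
    m * u * m⁻¹ ∈ VJ x o J := by
  refine norm_lem (MJ_inv H) ?_ hm hu
  rintro _ ⟨a, b, s, ha, hb, hab, rfl⟩ _ ⟨j, t, hj, rfl⟩
  have hao : o ≠ a := fun h => ho (h ▸ ha)
  have hbo : o ≠ b := fun h => ho (h ▸ hb)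
  have hjo : o ≠ j := fun h => ho (h ▸ hj)
  by_cases haj : j = b
  · subst haj
    rw [sc_conj (H.sc1 hab hbo.symm hao.symm s t)]
    exact Subgroup.mul_mem _ (mem_VJ ha _) (mem_VJ hj _)
  · rw [sc_conj (H.sc3 hab hjo.symm (Ne.symm haj) hao.symm s t)]
    exact mem_VJ hj _

lemma h_norm_gen (hn : 3 ≤ n) (hok : o ≠ k) {T : Set G}
    (hT : ∀ s ∈ T, ∃ i j t, i ≠ j ∧ s = x i j t ∧ ∀ t', x i j t' ∈ T) {a : ℂ} (ha : a ≠ 0) {u : G}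
    (hu : u ∈ Subgroup.closure T) : sh x o k a * u * (sh x o k a)⁻¹ ∈ Subgroup.closure T := by
  induction hu using Subgroup.closure_induction with
  | mem s hs =>
    obtain ⟨i, j, t, hij, rfl, h⟩ := hT s hs
    rw [sc_conj (H.h_conj hn hok hij ha t)]
    exact Subgroup.subset_closure (h _)
  | one => simp
  | mul a b _ _ ha hb =>
    have := Subgroup.mul_mem _ ha hb
    convert this using 1; group
  | inv a _ ha =>
    have := Subgroup.inv_mem _ ha
    convert this using 1; group

lemma h_norm_U (hn : 3 ≤ n) (hok : o ≠ k) (ho : o ∉ J) {a : ℂ} (ha : a ≠ 0) {u : G}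
    (hu : u ∈ UJ x o J) : sh x o k a * u * (sh x o k a)⁻¹ ∈ UJ x o J := by
  refine h_norm_gen H hn hok ?_ ha hu
  rintro _ ⟨j, t, hj, rfl⟩
  exact ⟨o, j, t, fun h => ho (h ▸ hj), rfl, fun t' => ⟨j, t', hj, rfl⟩⟩
lemma h_norm_V (hn : 3 ≤ n) (hok : o ≠ k) (ho : o ∉ J) {a : ℂ} (ha : a ≠ 0) {u : G}
    (hu : u ∈ VJ x o J) : sh x o k a * u * (sh x o k a)⁻¹ ∈ VJ x o J := by
  refine h_norm_gen H hn hok ?_ ha hu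
  rintro _ ⟨j, t, hj, rfl⟩
  exact ⟨j, o, t, fun h => ho (h ▸ hj), rfl, fun t' => ⟨j, t', hj, rfl⟩⟩
lemma h_norm_M (hn : 3 ≤ n) (hok : o ≠ k) {a : ℂ} (ha : a ≠ 0) {u : G}
    (hu : u ∈ MJ x J) : sh x o k a * u * (sh x o k a)⁻¹ ∈ MJ x J := by
  refine h_norm_gen H hn hok ?_ ha hu
  rintro _ ⟨i, j, t, hi, hj, hij, rfl⟩
  exact ⟨i, j, t, hij, rfl, fun t' => ⟨i, j, t', hi, hj, hij, rfl⟩⟩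

omit H in
lemma cell_mul_U {y g : G} (hy : y ∈ Cell x o k J) (hg : g ∈ UJ x o J) : y * g ∈ Cell x o k J := by
  obtain ⟨f, hf, a, ha, m, hm, u, hu, rfl⟩ := hy
  exact ⟨f, hf, a, ha, m, hm, u * g, Subgroup.mul_mem _ hu hg, by group⟩

lemma cell_mul_M (ho : o ∉ J) {y g : G} (hy : y ∈ Cell x o k J) (hg : g ∈ MJ x J) :
    y * g ∈ Cell x o k J := by
  obtain ⟨f, hf, a, ha, m, hm, u, hu, rfl⟩ := hy
  refine ⟨f, hf, a, ha, m * g, Subgroup.mul_mem _ hm hg, g⁻¹ * u * g, ?_, by group⟩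
  simpa using M_norm_U H ho (Subgroup.inv_mem _ hg) hu

lemma U_split (ho : o ∉ J) (hok : o ≠ k) {u : G} (hu : u ∈ UJ x o J) :
    ∃ u' ∈ UJ x o (J.erase k), ∃ s, u = u' * x o k s := by
  refine clos_ind (p := fun u => ∃ u' ∈ UJ x o (J.erase k), ∃ s, u = u' * x o k s)
    (UJ_inv H ho) ⟨1, Subgroup.one_mem _, 0, by rw [H.zero hok, one_mul]⟩ ?_ hu
  rintro y - _ ⟨j, t, hj, rfl⟩ ⟨u', hu', s, rfl⟩
  have hjo : o ≠ j := fun h => ho (h ▸ hj)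
  by_cases hjk : j = k
  · subst hjk
    exact ⟨u', hu', s + t, by rw [H.add _ _ hok, mul_assoc]⟩
  · refine ⟨u' * x o j t, Subgroup.mul_mem _ hu' (mem_UJ (by simp [hjk, hj]) t), s, ?_⟩
    rw [mul_assoc, mul_assoc, H.comm o k o j hok hjo hok.symm hjo]

lemma U_pass (ho : o ∉ J) (hk : k ∈ J) (r : ℂ) {u : G} (hu : u ∈ UJ x o (J.erase k)) :
    ∃ m' ∈ MJ x J, ∃ u' ∈ UJ x o J, u * x k o r = x k o r * m' * u' := by
  have hok : o ≠ k := fun h => ho (h ▸ hk)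
  refine clos_ind (p := fun u => ∃ m' ∈ MJ x J, ∃ u' ∈ UJ x o J, u * x k o r = x k o r * m' * u')
    (UJ_inv H (fun h => ho (Finset.mem_of_mem_erase h)))
    ⟨1, Subgroup.one_mem _, 1, Subgroup.one_mem _, by simp⟩ ?_ hu
  rintro y - _ ⟨j, c, hj, rfl⟩ ⟨m', hm', u', hu', e⟩
  obtain ⟨hjk, hj⟩ := Finset.mem_erase.mp hj
  have hjo : o ≠ j := fun h => ho (h ▸ hj)
  have e1 : x o j c * x k o r = x k o r * x k j (-(r * c)) * x o j c := by
    have h1 := H.brk k o j hok.symm hjo hjk.symm r c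
    have h2 := H.comm k j k o hjk.symm hok.symm hjk hok.symm (-(r * c)) r
    rw [← h2, mul_assoc, h1, H.neg hjk.symm]
    group
  have hx : x k j (-(r * c)) ∈ MJ x J := mem_MJ hk hj hjk.symm _
  refine ⟨m' * x k j (-(r * c)), Subgroup.mul_mem _ hm' hx,
    (x k j (-(r * c)))⁻¹ * u' * x k j (-(r * c)) * x o j c, Subgroup.mul_mem _ ?_ (mem_UJ hj c), ?_⟩
  · simpa using M_norm_U H ho (Subgroup.inv_mem _ hx) hu'
  · rw [mul_assoc, e1, ← mul_assoc, ← mul_assoc, e]; group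

lemma cell_mul_x (hn : 3 ≤ n)
    (hm : ∀ i q, i ≠ q → ∀ s t : ℂ, s ≠ 0 → t ≠ 0 → sh x i q (s * t) = sh x i q t * sh x i q s)
    (ho : o ∉ J) (hk : k ∈ J) {f m u : G} {a s t : ℂ} (hf : f ∈ VJ x o J)
    (ha : a ≠ 0) (hmm : m ∈ MJ x J) (hu : u ∈ UJ x o (J.erase k)) (hb : 1 + s * t ≠ 0) :
    f * sh x o k a * m * (u * x o k s) * x k o t ∈ Cell x o k J := by
  have hok : o ≠ k := fun h => ho (h ▸ hk)
  have r1 := H.rank_one hn hok (hm o k hok) s t hb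
  set b := 1 + s * t with hbd
  set r := t / b
  obtain ⟨m', hm', u', hu', e⟩ := U_pass H ho hk r hu
  have hbi : (sh x o k b)⁻¹ = sh x o k b⁻¹ := by
    symm
    rw [eq_inv_iff_mul_eq_one, ← hm o k hok b b⁻¹ hb (inv_ne_zero hb), mul_inv_cancel₀ hb,
      H.h_one hok]
  refine ⟨f * (sh x o k a * (m * x k o r * m⁻¹) * (sh x o k a)⁻¹), Subgroup.mul_mem _ hf
      (h_norm_V H hn hok ho ha (M_norm_V H ho hmm (mem_VJ hk r))), b * a, mul_ne_zero hb ha,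
    sh x o k b⁻¹ * (m * m') * (sh x o k b⁻¹)⁻¹,
    h_norm_M H hn hok (inv_ne_zero hb) (Subgroup.mul_mem _ hmm hm'),
    (sh x o k b⁻¹ * u' * (sh x o k b⁻¹)⁻¹) * x o k (s / b),
    Subgroup.mul_mem _ (h_norm_U H hn hok ho (inv_ne_zero hb) hu') (mem_UJ hk _), ?_⟩
  rw [hm o k hok b a hb ha, ← hbi]
  calc _ = f * sh x o k a * m * u * (x o k s * x k o t) := by group
    _ = f * sh x o k a * m * (u * x k o r) * sh x o k b * x o k (s / b) := by rw [r1]; group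
    _ = _ := by rw [e]; group

/-- simplified generators -/
lemma MJ_insert (ho : o ∉ J) (hk : k ∈ J) : MJ x (insert o J) =
    Subgroup.closure ({z | z ∈ UJ x o J} ∪ {z | z ∈ MJ x J} ∪ {z | ∃ t, z = x k o t}) := by
  have hok : o ≠ k := fun h => ho (h ▸ hk)
  have hne : ∀ i ∈ J, o ≠ i := fun i hi h => ho (h ▸ hi)
  apply le_antisymm
  · rw [MJ, Subgroup.closure_le]
    have hU : UJ x o J ≤ Subgroup.closure
      ({z | z ∈ UJ x o J} ∪ {z | z ∈ MJ x J} ∪ {z | ∃ t, z = x k o t}) :=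
      fun z hz => Subgroup.subset_closure (Or.inl (Or.inl hz))
    have hM : MJ x J ≤ Subgroup.closure
      ({z | z ∈ UJ x o J} ∪ {z | z ∈ MJ x J} ∪ {z | ∃ t, z = x k o t}) :=
      fun z hz => Subgroup.subset_closure (Or.inl (Or.inr hz))
    have hx : ∀ t, x k o t ∈ Subgroup.closure
      ({z | z ∈ UJ x o J} ∪ {z | z ∈ MJ x J} ∪ {z | ∃ t, z = x k o t}) :=
      fun t => Subgroup.subset_closure (Or.inr ⟨t, rfl⟩)
    rintro _ ⟨i, j, t, hi, hj, hij, rfl⟩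
    rw [Finset.mem_insert] at hi hj
    rcases hi with rfl | hi
    · rcases hj with rfl | hj
      · exact absurd rfl hij
      · exact hU (mem_UJ hj t)
    · rcases hj with rfl | hj
      · by_cases hik : i = k
        · subst hik; exact hx t
        · have := H.eq_comm_elt hik hok.symm hij t 1
          rw [mul_one] at this
          rw [this]
          have h1 := hM (mem_MJ hi hk hik t)
          have h2 := hx 1
          exact Subgroup.mul_mem _ (Subgroup.mul_mem _ (Subgroup.mul_mem _ h1 h2)
            (Subgroup.inv_mem _ h1)) (Subgroup.inv_mem _ h2)
      · exact hM (mem_MJ hi hj hij t)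
  · rw [Subgroup.closure_le]
    rintro z ((hz | hz) | ⟨t, rfl⟩)
    · revert z
      show UJ x o J ≤ _
      rw [UJ, Subgroup.closure_le]
      rintro _ ⟨j, t, hj, rfl⟩
      exact mem_MJ (by simp) (by simp [hj]) (hne j hj) t
    · revert z
      show MJ x J ≤ _
      rw [MJ, Subgroup.closure_le]
      rintro _ ⟨i, j, t, hi, hj, hij, rfl⟩
      exact mem_MJ (by simp [hi]) (by simp [hj]) hij t
    · exact mem_MJ (by simp [hk]) (by simp) hok.symm t

end cell
end SLP


namespace SLP
section ent
variable {n N : ℕ} {X : Fin n → Fin n → ℂ → GL (Fin N) ℂ} {J : Finset (Fin n)} {o k : Fin n}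

lemma fst_coe (f g : SpecialLinearGroup (Fin n) ℂ × GL (Fin N) ℂ) (p q : Fin n) :
    (f * g).1 p q = ((f.1 : Matrix (Fin n) (Fin n) ℂ) * (g.1 : Matrix (Fin n) (Fin n) ℂ)) p q := rfl

lemma row_mul {A B : Matrix (Fin n) (Fin n) ℂ} {c : ℂ}
    (h : ∀ r, A o r = c * (1 : Matrix (Fin n) (Fin n) ℂ) o r) (q : Fin n) :
    (A * B) o q = c * B o q := by
  rw [Matrix.mul_apply]
  simp only [h, Matrix.one_apply]
  simp

lemma col_mul {A B : Matrix (Fin n) (Fin n) ℂ} {c : ℂ}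
    (h : ∀ r, B r o = c * (1 : Matrix (Fin n) (Fin n) ℂ) r o) (p : Fin n) :
    (A * B) p o = c * A p o := by
  rw [Matrix.mul_apply]
  simp only [h, Matrix.one_apply]
  simp [mul_comm]

lemma sh_row (hok : o ≠ k) {a : ℂ} (ha : a ≠ 0) (r : Fin n) :
    (sh (pr X) o k a).1 o r = a * (1 : Matrix (Fin n) (Fin n) ℂ) o r := by
  rw [pr_sh_fst]
  simp only [sh, sw, ← mul_assoc, mul_el_apply hok, mul_el_apply hok.symm, el_apply hok,
    Matrix.one_apply]
  by_cases h1 : r = o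
  · subst h1; (simp [hok, hok.symm, ha]; try ring)
  · by_cases h2 : r = k
    · subst h2; (simp [hok, hok.symm, ha]; try ring)
    · simp [h1, h2, hok, hok.symm, Ne.symm h1, Ne.symm h2]

lemma sh_col (hok : o ≠ k) {a : ℂ} (ha : a ≠ 0) (r : Fin n) :
    (sh (pr X) o k a).1 r o = a * (1 : Matrix (Fin n) (Fin n) ℂ) r o := by
  rw [pr_sh_fst]
  simp only [sh, sw, ← mul_assoc, mul_el_apply hok, mul_el_apply hok.symm, el_apply hok,
    Matrix.one_apply]
  by_cases h1 : r = o
  · subst h1; (simp [hok, hok.symm, ha]; try ring)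
  · by_cases h2 : r = k
    · subst h2; (simp [hok, hok.symm, ha]; try ring)
    · simp [h1, h2, hok, hok.symm]

lemma M_idOut {m : SpecialLinearGroup (Fin n) ℂ × GL (Fin N) ℂ} (hm : m ∈ MJ (pr X) J) :
    IdOut J (m.1 : Matrix (Fin n) (Fin n) ℂ) := by
  apply EG_idOut
  have : MJ (pr X) J ≤ (EG ℂ J).comap (MonoidHom.fst _ _) := by
    rw [MJ, Subgroup.closure_le]
    rintro _ ⟨i, j, t, hi, hj, hij, rfl⟩
    exact el_mem_EG hi hj hij t
  exact this hm

/-- the commuting family -/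
def gU (X : Fin n → Fin n → ℂ → GL (Fin N) ℂ) (o : Fin n) (J : Finset (Fin n)) (j : Fin n) (t : ℂ) :
    SpecialLinearGroup (Fin n) ℂ × GL (Fin N) ℂ := if j ∈ J then pr X o j t else 1
/-- the commuting family -/
def gV (X : Fin n → Fin n → ℂ → GL (Fin N) ℂ) (o : Fin n) (J : Finset (Fin n)) (j : Fin n) (t : ℂ) :
    SpecialLinearGroup (Fin n) ℂ × GL (Fin N) ℂ := if j ∈ J then pr X j o t else 1

lemma gU_CF (H : Stein X) (ho : o ∉ J) : CF (gU X o J) where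
  add i s t := by
    unfold gU
    split_ifs with h
    · have hne : o ≠ i := fun h' => ho (h' ▸ h)
      exact (pr_stein H).add o i hne s t
    · simp
  comm i j s t := by
    unfold gU
    split_ifs with h1 h2 h2
    · have hne : o ≠ i := fun h' => ho (h' ▸ h1)
      have hne2 : o ≠ j := fun h' => ho (h' ▸ h2)
      exact (pr_stein H).comm o i o j hne hne2 hne.symm hne2 s t
    all_goals simp

lemma gV_CF (H : Stein X) (ho : o ∉ J) : CF (gV X o J) where
  add i s t := by
    unfold gV
    split_ifs with h
    · have hne : o ≠ i := fun h' => ho (h' ▸ h)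
      exact (pr_stein H).add i o hne.symm s t
    · simp
  comm i j s t := by
    unfold gV
    split_ifs with h1 h2 h2
    · have hne : o ≠ i := fun h' => ho (h' ▸ h1)
      have hne2 : o ≠ j := fun h' => ho (h' ▸ h2)
      exact (pr_stein H).comm i o j o hne.symm hne2.symm hne2 hne.symm s t
    all_goals simp

lemma gU_ent_aux (ho : o ∉ J) (v : Fin n → ℂ) (l : List (Fin n)) (hl : l.Nodup) (p q : Fin n) :
    ((l.map fun i => gU X o J i (v i)).prod).1 p q =
      (1 : Matrix (Fin n) (Fin n) ℂ) p q + if p = o ∧ q ∈ J ∧ q ∈ l then v q else 0 := by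
  induction l generalizing p q with
  | nil => simp
  | cons i l ih =>
    obtain ⟨hi, hl⟩ := List.nodup_cons.mp hl
    simp only [List.map_cons, List.prod_cons, Prod.fst_mul]
    by_cases hiJ : i ∈ J
    · have hne : o ≠ i := fun h' => ho (h' ▸ hiJ)
      rw [show gU X o J i (v i) = pr X o i (v i) by simp [gU, hiJ]]
      simp only [pr, el_mul_apply hne, ih hl]
      by_cases hp : p = o
      · subst hp
        by_cases hq : q = i
        · subst hq; simp [hi, hiJ, hne.symm]
        · simp [hq, hne.symm, Matrix.one_apply, Ne.symm hq]
      · simp [hp]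
    · rw [show gU X o J i (v i) = 1 by simp [gU, hiJ]]
      simp only [Prod.fst_one, one_mul, ih hl]
      congr 1
      by_cases hq : q = i
      · subst hq; simp [hiJ]
      · simp [hq]

lemma gV_ent_aux (ho : o ∉ J) (v : Fin n → ℂ) (l : List (Fin n)) (hl : l.Nodup) (p q : Fin n) :
    ((l.map fun i => gV X o J i (v i)).prod).1 p q =
      (1 : Matrix (Fin n) (Fin n) ℂ) p q + if q = o ∧ p ∈ J ∧ p ∈ l then v p else 0 := by
  induction l generalizing p q with
  | nil => simp
  | cons i l ih =>
    obtain ⟨hi, hl⟩ := List.nodup_cons.mp hl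
    simp only [List.map_cons, List.prod_cons, Prod.fst_mul]
    by_cases hiJ : i ∈ J
    · have hne : o ≠ i := fun h' => ho (h' ▸ hiJ)
      rw [show gV X o J i (v i) = pr X i o (v i) by simp [gV, hiJ]]
      simp only [pr, el_mul_apply hne.symm, ih hl]
      by_cases hp : p = i
      · subst hp
        by_cases hq : q = o
        · subst hq; simp [hi, hiJ, ho]
        · simp [hq, Matrix.one_apply, Ne.symm hq]
      · simp [hp]
    · rw [show gV X o J i (v i) = 1 by simp [gV, hiJ]]
      simp only [Prod.fst_one, one_mul, ih hl]
      congr 1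
      by_cases hq : p = i
      · subst hq; simp [hiJ]
      · simp [hq]

lemma gU_ent (ho : o ∉ J) (v : Fin n → ℂ) (p q : Fin n) : (Lp (gU X o J) v).1 p q =
      (1 : Matrix (Fin n) (Fin n) ℂ) p q + if p = o ∧ q ∈ J then v q else 0 := by
  have := gU_ent_aux (X := X) ho v _ (List.nodup_finRange n) p q
  simp only [List.mem_finRange, and_true] at this
  exact this
lemma gV_ent (ho : o ∉ J) (v : Fin n → ℂ) (p q : Fin n) : (Lp (gV X o J) v).1 p q =
      (1 : Matrix (Fin n) (Fin n) ℂ) p q + if q = o ∧ p ∈ J then v p else 0 := by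
  have := gV_ent_aux (X := X) ho v _ (List.nodup_finRange n) p q
  simp only [List.mem_finRange, and_true] at this
  exact this

lemma gU_mem (v : Fin n → ℂ) : Lp (gU X o J) v ∈ UJ (pr X) o J := by
  apply lp_mem
  intro i t
  unfold gU
  split_ifs with h
  · exact mem_UJ h t
  · exact Subgroup.one_mem _

lemma U_eq (H : Stein X) (ho : o ∉ J) {u : SpecialLinearGroup (Fin n) ℂ × GL (Fin N) ℂ}
    (hu : u ∈ UJ (pr X) o J) : u = Lp (gU X o J) (fun q => u.1 o q) := by
  obtain ⟨v, rfl⟩ := (gU_CF H ho).exists_lp (u := u) (by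
    refine Subgroup.closure_mono ?_ hu
    rintro _ ⟨j, t, hj, rfl⟩
    exact ⟨j, t, by simp [gU, hj]⟩)
  simp only [gU_ent ho]
  unfold Lp
  congr 2
  ext1 i
  unfold gU
  split_ifs with h
  · have hne : o ≠ i := fun h' => ho (h' ▸ h)
    simp [hne, h]
  · rfl

lemma V_eq (H : Stein X) (ho : o ∉ J) {u : SpecialLinearGroup (Fin n) ℂ × GL (Fin N) ℂ}
    (hu : u ∈ VJ (pr X) o J) : u = Lp (gV X o J) (fun q => u.1 q o) := by
  obtain ⟨v, rfl⟩ := (gV_CF H ho).exists_lp (u := u) (by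
    refine Subgroup.closure_mono ?_ hu
    rintro _ ⟨j, t, hj, rfl⟩
    exact ⟨j, t, by simp [gV, hj]⟩)
  simp only [gV_ent ho]
  unfold Lp
  congr 2
  ext1 i
  unfold gV
  split_ifs with h
  · have hne : o ≠ i := fun h' => ho (h' ▸ h)
    simp [hne.symm, h]
  · rfl

lemma U_ent (H : Stein X) (ho : o ∉ J) {u : SpecialLinearGroup (Fin n) ℂ × GL (Fin N) ℂ}
    (hu : u ∈ UJ (pr X) o J) {p q : Fin n} (h : p ≠ o ∨ q ∉ J) :
    u.1 p q = (1 : Matrix (Fin n) (Fin n) ℂ) p q := by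
  rw [U_eq H ho hu, gU_ent ho, if_neg (by tauto), add_zero]
lemma V_ent (H : Stein X) (ho : o ∉ J) {u : SpecialLinearGroup (Fin n) ℂ × GL (Fin N) ℂ}
    (hu : u ∈ VJ (pr X) o J) {p q : Fin n} (h : q ≠ o ∨ p ∉ J) :
    u.1 p q = (1 : Matrix (Fin n) (Fin n) ℂ) p q := by
  rw [V_eq H ho hu, gV_ent ho, if_neg (by tauto), add_zero]

lemma cell_row (H : Stein X) (ho : o ∉ J) (hok : o ≠ k) {a : ℂ} (ha : a ≠ 0)
    {f m u : SpecialLinearGroup (Fin n) ℂ × GL (Fin N) ℂ}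
    (hf : f ∈ VJ (pr X) o J) (hm : m ∈ MJ (pr X) J) (q : Fin n) :
    (f * sh (pr X) o k a * m * u).1 o q = a * u.1 o q := by
  rw [fst_coe]
  apply row_mul
  intro r
  rw [mul_assoc, fst_coe, row_mul (c := 1), one_mul, fst_coe, row_mul (c := a),
    M_idOut hm o r (Or.inl ho)]
  · intro r; exact sh_row hok ha r
  · intro r; rw [V_ent H ho hf (Or.inr ho), one_mul]

lemma cell_col (H : Stein X) (ho : o ∉ J) (hok : o ≠ k) {a : ℂ} (ha : a ≠ 0)
    {f m u : SpecialLinearGroup (Fin n) ℂ × GL (Fin N) ℂ}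
    (hm : m ∈ MJ (pr X) J) (hu : u ∈ UJ (pr X) o J) (p : Fin n) :
    (f * sh (pr X) o k a * m * u).1 p o = a * f.1 p o := by
  rw [fst_coe, col_mul (c := 1), one_mul, fst_coe, col_mul (c := 1), one_mul, fst_coe,
    col_mul (c := a)]
  · intro r; exact sh_col hok ha r
  · intro r; rw [M_idOut hm r o (Or.inr ho), one_mul]
  · intro r; rw [U_ent H ho hu (Or.inr ho), one_mul]

lemma cell_mul_gen (H : Stein X) (hX : PolyFam X) (hn : 3 ≤ n) (ho : o ∉ J) (hk : k ∈ J)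
    {y : SpecialLinearGroup (Fin n) ℂ × GL (Fin N) ℂ} (hy : y ∈ Cell (pr X) o k J) (t : ℂ)
    (h : (y * pr X k o t).1 o o ≠ 0) : y * pr X k o t ∈ Cell (pr X) o k J := by
  have hok : o ≠ k := fun h => ho (h ▸ hk)
  obtain ⟨f, hf, a, ha, m, hm, u, hu, rfl⟩ := hy
  obtain ⟨u', hu', s, rfl⟩ := U_split (pr_stein H) ho hok hu
  refine cell_mul_x (pr_stein H) hn (fun i q hiq s t hs ht => pr_hmul hn H hX hiq s t hs ht)
    ho hk hf ha hm hu' ?_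
  rw [Prod.fst_mul] at h
  simp only [pr] at h
  rw [mul_el_apply hok.symm, if_pos rfl] at h
  have ho' : o ∉ J.erase k := fun h => ho (Finset.mem_of_mem_erase h)
  have e1 := cell_row H ho hok ha hf hm (u := u' * pr X o k s) o
  have e2 := cell_row H ho hok ha hf hm (u := u' * pr X o k s) k
  rw [Prod.fst_mul u'] at e1 e2
  simp only [pr] at e1 e2
  rw [mul_el_apply hok, U_ent H ho' hu' (Or.inr ho')] at e1
  rw [mul_el_apply hok, U_ent H ho' hu' (Or.inr ho'), U_ent H ho' hu' (Or.inr (by simp))] at e2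
  simp only [Matrix.one_apply_eq, Matrix.one_apply_ne hok, if_neg hok, if_true] at e1 e2
  intro hb
  apply h
  refine Eq.trans (congrArg₂ (· + ·) e1 (congrArg (t * ·) e2)) ?_
  linear_combination a * hb

lemma dense (H : Stein X) (hX : PolyFam X) (hn : 3 ≤ n) (ho : o ∉ J) (hk : k ∈ J)
    {y : SpecialLinearGroup (Fin n) ℂ × GL (Fin N) ℂ} (hy : y ∈ MJ (pr X) (insert o J)) :
    ∀ᶠ t in Filter.cofinite,
      Lp (gU X o J) (fun j => t ^ (j.val + 1)) * y ∈ Cell (pr X) o k J := by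
  have hok : o ≠ k := fun h => ho (h ▸ hk)
  have hy' := hy
  rw [MJ_insert (pr_stein H) ho hk] at hy'
  refine clos_ind (p := fun y => ∀ᶠ t in Filter.cofinite,
      Lp (gU X o J) (fun j => t ^ (j.val + 1)) * y ∈ Cell (pr X) o k J) ?_ ?_ ?_ hy'
  · rintro z ((hz | hz) | ⟨t, rfl⟩)
    · exact Or.inl (Or.inl ((UJ (pr X) o J).inv_mem hz))
    · exact Or.inl (Or.inr ((MJ (pr X) J).inv_mem hz))
    · exact Or.inr ⟨-t, ((pr_stein H).neg hok.symm t).symm⟩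
  · refine Filter.Eventually.of_forall fun t => ?_
    exact ⟨1, Subgroup.one_mem _, 1, one_ne_zero, 1, Subgroup.one_mem _, _,
      gU_mem (fun j => t ^ (j.val + 1)),
      by rw [(pr_stein H).h_one hok]; simp⟩
  · intro y hy s hs ih
    rcases hs with (hz | hz) | ⟨c, rfl⟩
    · filter_upwards [ih] with t ht
      rw [← mul_assoc]; exact cell_mul_U ht hz
    · filter_upwards [ih] with t ht
      rw [← mul_assoc]; exact cell_mul_M (pr_stein H) ho ht hz
    · set z := y * pr X k o c with hz
      have hzM : z ∈ MJ (pr X) (insert o J) := by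
        rw [← MJ_insert (pr_stein H) ho hk] at hy
        exact Subgroup.mul_mem _ hy (mem_MJ (by simp [hk]) (by simp) hok.symm c)
      set Q : Polynomial ℂ := Polynomial.C (z.1 o o) +
        ∑ p ∈ J, Polynomial.C (z.1 p o) * Polynomial.X ^ (p.val + 1) with hQ
      have hQe : ∀ t, (Lp (gU X o J) (fun j => t ^ (j.val + 1)) * z).1 o o = Q.eval t := by
        intro t
        rw [fst_coe, Matrix.mul_apply]
        simp only [gU_ent ho, add_mul, Finset.sum_add_distrib, Matrix.one_apply]
        rw [hQ]
        simp only [ite_mul, one_mul, zero_mul, true_and, Polynomial.eval_add, Polynomial.eval_C,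
          Polynomial.eval_finset_sum, Polynomial.eval_mul, Polynomial.eval_pow, Polynomial.eval_X]
        rw [Finset.sum_ite_eq, if_pos (Finset.mem_univ o), Finset.sum_ite_mem, Finset.univ_inter]
        congr 1
        exact Finset.sum_congr rfl fun p _ => mul_comm _ _
      have hQ0 : Q ≠ 0 := by
        intro h0
        have c0 : z.1 o o = 0 := by
          have := congrArg (Polynomial.coeff · 0) h0
          simpa [hQ, Polynomial.finset_sum_coeff] using this
        have cp : ∀ p ∈ J, z.1 p o = 0 := by
          intro p hp
          have := congrArg (Polynomial.coeff · (p.val + 1)) h0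
          simp only [hQ, Polynomial.coeff_add, Polynomial.coeff_C_succ,
            Polynomial.finset_sum_coeff, Polynomial.coeff_C_mul_X_pow, zero_add,
            Polynomial.coeff_zero] at this
          rw [Finset.sum_eq_single p] at this
          · simpa using this
          · intro b _ hb
            rw [if_neg]
            intro h
            apply hb
            ext; omega
          · exact fun h => absurd hp h
        have call : ∀ p, z.1 p o = 0 := by
          intro p
          by_cases hp : p ∈ insert o J
          · rcases Finset.mem_insert.mp hp with rfl | hp
            · exact c0
            · exact cp p hp
          · rw [M_idOut hzM p o (Or.inl hp), Matrix.one_apply_ne]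
            rintro rfl; simp at hp
        have := row_unimod (z.1⁻¹) o
        simp [call] at this
      have hfin : ∀ᶠ t in Filter.cofinite, Q.eval t ≠ 0 := by
        have := Polynomial.finite_setOf_isRoot hQ0
        filter_upwards [this.compl_mem_cofinite] with t ht
        exact ht
      filter_upwards [ih, hfin] with t ht hq
      rw [hz, ← mul_assoc]
      apply cell_mul_gen H hX hn ho hk ht
      rw [mul_assoc, ← hz, hQe]
      exact hq

end ent
end SLP


namespace SLP
section algs
variable {Y : Type*} {n N : ℕ}

/-- polynomial functions in the entries of `π` -/
noncomputable def PolyS (π : Y → Matrix (Fin n) (Fin n) ℂ) : Subalgebra ℂ (Y → ℂ) :=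
  (MvPolynomial.aeval (fun (q : Fin n × Fin n) (y : Y) => π y q.1 q.2)).range

lemma aeval_pi {σ : Type*} (r : σ → Y → ℂ) (P : MvPolynomial σ ℂ) (y : Y) :
    MvPolynomial.aeval r P y = MvPolynomial.eval (fun q => r q y) P := by
  induction P using MvPolynomial.induction_on with
  | C a => simp
  | add p q hp hq => simp [hp, hq]
  | mul_X p i hp => simp [hp]

lemma mem_PolyS {π : Y → Matrix (Fin n) (Fin n) ℂ} {f : Y → ℂ} : f ∈ PolyS π ↔
    ∃ P : MvPolynomial (Fin n × Fin n) ℂ, ∀ y, f y = MvPolynomial.eval (fun q => π y q.1 q.2) P := by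
  constructor
  · rintro ⟨P, rfl⟩
    exact ⟨P, fun y => aeval_pi _ P y⟩
  · rintro ⟨P, hP⟩
    refine ⟨P, funext fun y => ?_⟩
    rw [hP y]
    exact aeval_pi _ P y

lemma PolyS_MR (π : Y → Matrix (Fin n) (Fin n) ℂ) : MR (PolyS π) π := fun a b =>
  mem_PolyS.mpr ⟨MvPolynomial.X (a, b), fun y => by simp⟩

lemma MR.mv {A : Subalgebra ℂ (Y → ℂ)} {π : Y → Matrix (Fin n) (Fin n) ℂ} (h : MR A π)
    (P : MvPolynomial (Fin n × Fin n) ℂ) :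
    (fun y => MvPolynomial.eval (fun q => π y q.1 q.2) P) ∈ A :=
  mem_mvpoly (r := fun (q : Fin n × Fin n) y => π y q.1 q.2) (fun q => h q.1 q.2) P

/-- localization -/
def LocS (A : Subalgebra ℂ (Y → ℂ)) (d : Y → ℂ) (hd : d ∈ A) : Subalgebra ℂ (Y → ℂ) where
  carrier := {f | ∃ M : ℕ, d ^ M * f ∈ A}
  mul_mem' := by
    rintro f g ⟨M, hM⟩ ⟨M', hM'⟩
    refine ⟨M + M', ?_⟩
    have := A.mul_mem hM hM'
    convert this using 1; ring
  add_mem' := by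
    rintro f g ⟨M, hM⟩ ⟨M', hM'⟩
    refine ⟨M + M', ?_⟩
    have := A.add_mem (A.mul_mem (A.pow_mem hd M') hM) (A.mul_mem (A.pow_mem hd M) hM')
    convert this using 1; ring
  algebraMap_mem' := fun c => ⟨0, by simpa using A.algebraMap_mem c⟩

lemma le_LocS (A : Subalgebra ℂ (Y → ℂ)) (d : Y → ℂ) (hd : d ∈ A) {f : Y → ℂ} (hf : f ∈ A) :
    f ∈ LocS A d hd := ⟨0, by simpa using hf⟩

lemma inv_LocS (A : Subalgebra ℂ (Y → ℂ)) (d : Y → ℂ) (hd : d ∈ A) (h0 : ∀ y, d y ≠ 0) :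
    (fun y => (d y)⁻¹) ∈ LocS A d hd := by
  refine ⟨1, ?_⟩
  have : d ^ 1 * (fun y => (d y)⁻¹) = 1 := by
    ext y; simp [h0 y]
  rw [this]; exact A.one_mem

lemma GR.sh {A : Subalgebra ℂ (Y → ℂ)} {X : Fin n → Fin n → ℂ → GL (Fin N) ℂ} (hX : PolyFam X)
    {i j : Fin n} (h : i ≠ j) {r : Y → ℂ} (hr : r ∈ A) (hr' : (fun y => (r y)⁻¹) ∈ A) :
    GR A (fun y => SLP.sh (SLP.pr X) i j (r y)) := by
  have h1 := GR.pr hX h hr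
  have h2 := GR.pr hX h.symm (A.neg_mem hr')
  exact ((h1.mul h2).mul h1).mul (GR.const (sw (SLP.pr X) i j (-1)))

lemma GR.gU {A : Subalgebra ℂ (Y → ℂ)} {X : Fin n → Fin n → ℂ → GL (Fin N) ℂ} (hX : PolyFam X)
    {o : Fin n} {J : Finset (Fin n)} (ho : o ∉ J) {v : Y → Fin n → ℂ}
    (hv : ∀ q, (fun y => v y q) ∈ A) : GR A (fun y => Lp (SLP.gU X o J) (v y)) := by
  apply GR.list
  intro i
  unfold SLP.gU
  by_cases h : i ∈ J
  · have hne : o ≠ i := fun h' => ho (h' ▸ h)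
    simp only [if_pos h]
    exact GR.pr hX hne (hv i)
  · simp only [if_neg h]
    exact GR.const 1

lemma GR.gV {A : Subalgebra ℂ (Y → ℂ)} {X : Fin n → Fin n → ℂ → GL (Fin N) ℂ} (hX : PolyFam X)
    {o : Fin n} {J : Finset (Fin n)} (ho : o ∉ J) {v : Y → Fin n → ℂ}
    (hv : ∀ q, (fun y => v y q) ∈ A) : GR A (fun y => Lp (SLP.gV X o J) (v y)) := by
  apply GR.list
  intro i
  unfold SLP.gV
  by_cases h : i ∈ J
  · have hne : o ≠ i := fun h' => ho (h' ▸ h)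
    simp only [if_pos h]
    exact GR.pr hX hne.symm (hv i)
  · simp only [if_neg h]
    exact GR.const 1
end algs

section main
variable {n N : ℕ} {X : Fin n → Fin n → ℂ → GL (Fin N) ℂ} {J : Finset (Fin n)} {o k : Fin n}

/-- second coordinate is polynomial in first -/
def PolyOn (X : Fin n → Fin n → ℂ → GL (Fin N) ℂ) (J : Finset (Fin n)) : Prop :=
  ∀ a b, ∃ P : MvPolynomial (Fin n × Fin n) ℂ, ∀ y ∈ MJ (pr X) J,
    (y.2 : Matrix (Fin N) (Fin N) ℂ) a b = MvPolynomial.eval (fun q => y.1 q.1 q.2) P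

lemma exB {Y : Type*} (π : Y → Matrix (Fin n) (Fin n) ℂ) (d : Y → ℂ) (hd : ∀ y, d y = π y o o)
    (d0 : ∀ y, d y ≠ 0) : ∃ B : Subalgebra ℂ (Y → ℂ), d ∈ B ∧ (fun y => (d y)⁻¹) ∈ B ∧ MR B π ∧
      ∀ f ∈ B, ∃ M : ℕ, ∃ P : MvPolynomial (Fin n × Fin n) ℂ, ∀ y, d y ^ M * f y =
        MvPolynomial.eval (fun q => π y q.1 q.2) P := by
  have hd : d ∈ PolyS π := by
    have := PolyS_MR π o o
    simp only [← hd] at this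
    exact this
  refine ⟨LocS (PolyS π) d hd, le_LocS _ d hd hd, inv_LocS _ d hd d0,
    fun p q => le_LocS _ d hd (PolyS_MR π p q), ?_⟩
  rintro f ⟨M, hM⟩
  obtain ⟨P, hPP⟩ := mem_PolyS.mp hM
  exact ⟨M, P, hPP⟩

lemma mr1_mul {Y : Type*} {A : Subalgebra ℂ (Y → ℂ)}
    {φ ψ : Y → SpecialLinearGroup (Fin n) ℂ × GL (Fin N) ℂ}
    (h1 : MR A (fun y => ((φ y).1 : Matrix (Fin n) (Fin n) ℂ)))
    (h2 : MR A (fun y => ((ψ y).1 : Matrix (Fin n) (Fin n) ℂ))) :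
    MR A (fun y => ((φ y * ψ y).1 : Matrix (Fin n) (Fin n) ℂ)) := by
  simpa using h1.mul h2

lemma mr2_mul {Y : Type*} {A : Subalgebra ℂ (Y → ℂ)}
    {φ ψ : Y → SpecialLinearGroup (Fin n) ℂ × GL (Fin N) ℂ}
    (h1 : MR A (fun y => ((φ y).2 : Matrix (Fin N) (Fin N) ℂ)))
    (h2 : MR A (fun y => ((ψ y).2 : Matrix (Fin N) (Fin N) ℂ))) :
    MR A (fun y => ((φ y * ψ y).2 : Matrix (Fin N) (Fin N) ℂ)) := by
  simpa using h1.mul h2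

lemma mr2_poly {Y : Type*} {A : Subalgebra ℂ (Y → ℂ)}
    {m : Y → SpecialLinearGroup (Fin n) ℂ × GL (Fin N) ℂ} (hP : PolyOn X J)
    (hm : ∀ y, m y ∈ MJ (pr X) J) (hm1 : MR A (fun y => ((m y).1 : Matrix (Fin n) (Fin n) ℂ))) :
    MR A (fun y => ((m y).2 : Matrix (Fin N) (Fin N) ℂ)) := by
  intro a b
  obtain ⟨R, hR⟩ := hP a b
  have : (fun y => ((m y).2 : Matrix (Fin N) (Fin N) ℂ) a b) =
      fun y => MvPolynomial.eval (fun q => (m y).1 q.1 q.2) R :=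
    funext fun y => hR _ (hm y)
  rw [this]
  exact hm1.mv R

lemma cell_dec (H : Stein X) (hX : PolyFam X) (hn : 3 ≤ n) (ho : o ∉ J) (hk : k ∈ J)
    {y : SpecialLinearGroup (Fin n) ℂ × GL (Fin N) ℂ} (hy : y ∈ Cell (pr X) o k J)
    {d : ℂ} {v w : Fin n → ℂ} (hd : d = y.1 o o) (hv : ∀ q, v q = d⁻¹ * y.1 q o)
    (hw : ∀ q, w q = d⁻¹ * y.1 o q) :
    d ≠ 0 ∧ sh (pr X) o k d⁻¹ * Lp (gV X o J) (- v) * y * Lp (gU X o J) (- w) ∈ MJ (pr X) J ∧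
    Lp (gV X o J) v * sh (pr X) o k d * (sh (pr X) o k d⁻¹ * Lp (gV X o J) (- v) * y *
      Lp (gU X o J) (- w)) * Lp (gU X o J) w = y := by
  have hok : o ≠ k := fun h => ho (h ▸ hk)
  obtain ⟨f, hf, a, ha, m0, hm0, u, hu, e⟩ := hy
  have ed : d = a := by
    rw [hd, e, cell_row H ho hok ha hf hm0, U_ent H ho hu (Or.inr ho)]
    simp
  have ev : Lp (gV X o J) v = f := by
    conv_rhs => rw [V_eq H ho hf]
    congr 1
    ext q
    rw [hv, ed, e, cell_col H ho hok ha hm0 hu, inv_mul_cancel_left₀ ha]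
  have ew : Lp (gU X o J) w = u := by
    conv_rhs => rw [U_eq H ho hu]
    congr 1
    ext q
    rw [hw, ed, e, cell_row H ho hok ha hf hm0, inv_mul_cancel_left₀ ha]
  have hbi : sh (pr X) o k a⁻¹ = (sh (pr X) o k a)⁻¹ := by
    rw [eq_inv_iff_mul_eq_one, ← pr_hmul hn H hX hok a a⁻¹ ha (inv_ne_zero ha),
      mul_inv_cancel₀ ha, (pr_stein H).h_one hok]
  have em : sh (pr X) o k d⁻¹ * Lp (gV X o J) (- v) * y * Lp (gU X o J) (- w) = m0 := by
    rw [(gV_CF H ho).lp_neg, (gU_CF H ho).lp_neg, ev, ew, ed, hbi, e]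
    group
  rw [em, ev, ew, ed]
  exact ⟨ha, hm0, e.symm⟩

lemma cell_core (H : Stein X) (hX : PolyFam X) (hn : 3 ≤ n) (ho : o ∉ J) (hk : k ∈ J)
    (hP : PolyOn X J) {Y : Type*} (z : Y → SpecialLinearGroup (Fin n) ℂ × GL (Fin N) ℂ)
    (hz : ∀ y, z y ∈ Cell (pr X) o k J) (d : Y → ℂ) (v w : Y → Fin n → ℂ)
    (hd : ∀ y, d y = (z y).1 o o) (hv : ∀ y q, v y q = (d y)⁻¹ * (z y).1 q o)
    (hw : ∀ y q, w y q = (d y)⁻¹ * (z y).1 o q) (a b : Fin N) :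
    ∃ M : ℕ, ∃ P : MvPolynomial (Fin n × Fin n) ℂ,
      ∀ y, d y ^ M * ((z y).2 : Matrix (Fin N) (Fin N) ℂ) a b =
        MvPolynomial.eval (fun q => (z y).1 q.1 q.2) P := by
  have hok : o ≠ k := fun h => ho (h ▸ hk)
  have hD := fun y => cell_dec H hX hn ho hk (hz y) (hd y) (hv y) (hw y)
  obtain ⟨B, hdB, hdi, hπ, hB⟩ := exB (fun y => ((z y).1 : Matrix (Fin n) (Fin n) ℂ)) d hd
    (fun y => (hD y).1)
  have hv : ∀ q, (fun y => v y q) ∈ B := fun q => by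
    simp only [hv]; exact mem_mul hdi (hπ q o)
  have hw : ∀ q, (fun y => w y q) ∈ B := fun q => by
    simp only [hw]; exact mem_mul hdi (hπ o q)
  have hF := GR.gV hX ho hv
  have hE := GR.gU hX ho hw
  have hF' := GR.gV hX ho (v := fun y => - v y) (fun q => B.neg_mem (hv q))
  have hE' := GR.gU hX ho (v := fun y => - w y) (fun q => B.neg_mem (hw q))
  have hh := GR.sh hX hok hdB hdi
  have hh' := GR.sh hX hok hdi (by simpa using hdB)
  have hm1 := mr1_mul (mr1_mul (mr1_mul hh'.1 hF'.1) hπ) hE'.1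
  have hm2 := mr2_poly hP (fun y => (hD y).2.1) hm1
  have h1 := mr2_mul (mr2_mul (mr2_mul hF.2 hh.2) hm2) hE.2 a b
  simp only [(hD _).2.2] at h1
  exact hB _ h1

lemma cell_reg1 (H : Stein X) (hX : PolyFam X) (hn : 3 ≤ n) (ho : o ∉ J) (hk : k ∈ J)
    (hP : PolyOn X J) (a b : Fin N) : ∃ M : ℕ, ∃ P : MvPolynomial (Fin n × Fin n) ℂ,
      ∀ y ∈ Cell (pr X) o k J, y.1 o o ^ M * (y.2 : Matrix (Fin N) (Fin N) ℂ) a b =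
        MvPolynomial.eval (fun q => y.1 q.1 q.2) P := by
  obtain ⟨M, P, h⟩ := cell_core H hX hn ho hk hP (Subtype.val : {y // y ∈ Cell (pr X) o k J} → _)
    (fun y => y.2) _ _ _ (fun y => rfl) (fun y q => rfl) (fun y q => rfl) a b
  exact ⟨M, P, fun y hy => h ⟨y, hy⟩⟩

lemma polyalg : ∃ A : Subalgebra ℂ (ℂ → ℂ), (fun t : ℂ => t) ∈ A ∧
    ∀ f ∈ A, ∃ p : Polynomial ℂ, ∀ t, f t = p.eval t := by
  refine ⟨(Polynomial.aeval (id : ℂ → ℂ)).range, ⟨Polynomial.X, by simp; rfl⟩, ?_⟩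
  rintro _ ⟨p, rfl⟩
  refine ⟨p, fun t => ?_⟩
  show Polynomial.aeval (id : ℂ → ℂ) p t = _
  induction p using Polynomial.induction_on' with
  | add p q hp hq => simp [hp, hq]
  | monomial k a => simp [Polynomial.aeval_monomial]

lemma line_id (z : ℂ → SpecialLinearGroup (Fin n) ℂ × GL (Fin N) ℂ) (M : ℕ)
    (P : MvPolynomial (Fin n × Fin n) ℂ) (a b : Fin N)
    (hz : ∀ A : Subalgebra ℂ (ℂ → ℂ), (fun t : ℂ => t) ∈ A → GR A z)
    (hfin : {t : ℂ | ¬ ((z t).1 o o ^ M * ((z t).2 : Matrix (Fin N) (Fin N) ℂ) a b =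
      MvPolynomial.eval (fun q => (z t).1 q.1 q.2) P)}.Finite) (t : ℂ) :
    (z t).1 o o ^ M * ((z t).2 : Matrix (Fin N) (Fin N) ℂ) a b =
      MvPolynomial.eval (fun q => (z t).1 q.1 q.2) P := by
  obtain ⟨A, hid, hA⟩ := polyalg
  have hE := hz A hid
  have hl : (fun t => (z t).1 o o ^ M * ((z t).2 : Matrix (Fin N) (Fin N) ℂ) a b) ∈ A :=
    mem_mul (A.pow_mem (hE.1 o o) _) (hE.2 a b)
  have hr : (fun t => MvPolynomial.eval (fun q => (z t).1 q.1 q.2) P) ∈ A :=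
    hE.1.mv P
  obtain ⟨p, hp⟩ := hA _ hl
  obtain ⟨p', hp'⟩ := hA _ hr
  have hpp : p = p' := by
    apply Polynomial.eq_of_infinite_eval_eq
    have := hfin.infinite_compl
    refine this.mono fun t ht => ?_
    show p.eval t = p'.eval t
    rw [← hp, ← hp']
    exact not_not.mp ht
  have e1 := hp t
  have e2 := hp' t
  rw [hpp, ← e2] at e1
  exact e1

lemma cell_reg (H : Stein X) (hX : PolyFam X) (hn : 3 ≤ n) (ho : o ∉ J) (hk : k ∈ J)
    (hP : PolyOn X J) : ∃ M : ℕ, ∀ a b, ∃ P : MvPolynomial (Fin n × Fin n) ℂ,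
      ∀ y ∈ MJ (pr X) (insert o J), y.1 o o ^ M * (y.2 : Matrix (Fin N) (Fin N) ℂ) a b =
        MvPolynomial.eval (fun q => y.1 q.1 q.2) P := by
  choose M P hMP using cell_reg1 H hX hn ho hk hP
  refine ⟨∑ a, ∑ b, M a b, fun a b => ⟨MvPolynomial.X (o, o) ^ ((∑ a, ∑ b, M a b) - M a b) * P a b,
    ?_⟩⟩
  have hle : M a b ≤ ∑ a, ∑ b, M a b :=
    (Finset.single_le_sum (f := fun b => M a b) (fun _ _ => Nat.zero_le _) (Finset.mem_univ b)).trans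
      (Finset.single_le_sum (f := fun a => ∑ b, M a b) (fun _ _ => Nat.zero_le _)
        (Finset.mem_univ a))
  intro y hy
  suffices h : y.1 o o ^ M a b * (y.2 : Matrix (Fin N) (Fin N) ℂ) a b =
      MvPolynomial.eval (fun q => y.1 q.1 q.2) (P a b) by
    rw [map_mul, ← h, map_pow, MvPolynomial.eval_X]
    dsimp only
    rw [← mul_assoc, ← pow_add, Nat.sub_add_cancel hle]
  have h0 : Lp (gU X o J) (fun j => (0 : ℂ) ^ (j.val + 1)) * y = y := by
    have : (fun j : Fin n => (0 : ℂ) ^ (j.val + 1)) = 0 := by ext j; simp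
    rw [this, (gU_CF H ho).lp_zero, one_mul]
  have := line_id (fun t => Lp (gU X o J) (fun j => t ^ (j.val + 1)) * y) (o := o) (M a b) (P a b)
    a b (fun A hid => (GR.gU hX ho (fun q => A.pow_mem hid (q.val + 1))).mul (GR.const y))
    ((dense H hX hn ho hk hy).subset fun t ht ht' => ht (hMP a b _ ht')) 0
  simp only [h0] at this
  exact this

lemma poly_step (H : Stein X) (hX : PolyFam X) (hn : 3 ≤ n) (ho : o ∉ J) (hk : k ∈ J)
    (hP : PolyOn X J) : PolyOn X (insert o J) := by
  obtain ⟨M, hM⟩ := cell_reg H hX hn ho hk hP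
  let Y := {y // y ∈ MJ (pr X) (insert o J)}
  let π : Y → Matrix (Fin n) (Fin n) ℂ := fun y => (y.1.1 : Matrix (Fin n) (Fin n) ℂ)
  let A := PolyS π
  have hπ : MR A π := PolyS_MR π
  let f : Fin N → Fin N → Y → ℂ := fun a b y => (y.1.2 : Matrix (Fin N) (Fin N) ℂ) a b
  let I : Ideal A :=
    { carrier := {r | ∀ a b, (r : Y → ℂ) * f a b ∈ A}
      add_mem' := by
        intro r s hr hs a b
        have := A.add_mem (hr a b) (hs a b)
        rw [← add_mul] at this
        exact this
      zero_mem' := by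
        intro a b
        have : ((0 : A) : Y → ℂ) * f a b = 0 := by simp
        rw [this]; exact A.zero_mem
      smul_mem' := by
        intro c r hr a b
        have := A.mul_mem c.2 (hr a b)
        rw [← mul_assoc] at this
        exact this }
  let c : Fin n → A := fun j => ⟨fun y => π y o j, hπ o j⟩
  -- generators
  have h1 : c o ^ M ∈ I := by
    intro a b
    obtain ⟨P, hPP⟩ := hM a b
    exact mem_PolyS.mpr ⟨P, fun y => hPP y.1 y.2⟩
  have h2 : ∀ j ∈ J, (c o + c j) ^ M ∈ I := by
    intro j hj a b
    have hjo : o ≠ j := fun h => ho (h ▸ hj)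
    have hmem : pr X j o 1 ∈ MJ (pr X) (insert o J) := mem_MJ (by simp [hj]) (by simp) hjo.symm 1
    choose P hPP using hM
    let τ : Y → Y := fun y => ⟨y.1 * pr X j o 1, Subgroup.mul_mem _ y.2 hmem⟩
    have hτ : MR A (fun y => π (τ y)) := hπ.mul (MR.const _)
    have hτo : ∀ y, π (τ y) o o = π y o o + π y o j := by
      intro y
      have := mul_el_apply hjo.symm (1 : ℂ) y.1.1 o o
      rw [if_pos rfl, one_mul] at this
      exact this
    have e : (((c o + c j) ^ M : A) : Y → ℂ) * f a b = fun y => ∑ e,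
        MvPolynomial.eval (fun q => π (τ y) q.1 q.2) (P a e) *
          (((pr X j o 1)⁻¹).2 : Matrix (Fin N) (Fin N) ℂ) e b := by
      ext y
      have h3 : y.1.2 = (τ y).1.2 * ((pr X j o 1)⁻¹).2 := by
        show y.1.2 = (y.1 * pr X j o 1 * (pr X j o 1)⁻¹).2
        rw [mul_inv_cancel_right]
      have h4 : f a b y = ∑ e, ((τ y).1.2 : Matrix (Fin N) (Fin N) ℂ) a e *
          (((pr X j o 1)⁻¹).2 : Matrix (Fin N) (Fin N) ℂ) e b := by
        show (y.1.2 : Matrix (Fin N) (Fin N) ℂ) a b = _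
        rw [h3, Units.val_mul, Matrix.mul_apply]
      show (π y o o + π y o j) ^ M * f a b y = _
      rw [h4, Finset.mul_sum]
      refine Finset.sum_congr rfl fun e _ => ?_
      rw [← mul_assoc, ← hτo]
      congr 1
      exact hPP a e (τ y).1 (τ y).2
    rw [e]
    exact mem_sum _ fun e _ => mem_mul
      (hτ.mv _) (mem_const _)
  let S : Set A := {r | r = c o ∨ ∃ j ∈ J, r = c o + c j}
  have hS : Ideal.span S = ⊤ := by
    rw [Ideal.eq_top_iff_one]
    have hc : ∀ j, c j ∈ Ideal.span S := by
      intro j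
      have h0 : c o ∈ Ideal.span S := Ideal.subset_span (Or.inl rfl)
      by_cases hj : j ∈ insert o J
      · rcases Finset.mem_insert.mp hj with rfl | hj
        · exact h0
        · have : c o + c j ∈ Ideal.span S := Ideal.subset_span (Or.inr ⟨j, hj, rfl⟩)
          have := Ideal.sub_mem _ this h0
          rwa [add_sub_cancel_left] at this
      · have : c j = 0 := by
          apply Subtype.ext
          ext y
          show y.1.1 o j = 0
          rw [M_idOut y.2 o j (Or.inr hj), Matrix.one_apply_ne]
          rintro rfl; simp at hj
        rw [this]; exact Ideal.zero_mem _
    let i : Fin n → A := fun q => ⟨fun y => (π y).adjugate q o, hπ.adj q o⟩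
    have : (1 : A) = ∑ q, i q * c q := by
      apply Subtype.ext
      ext y
      have := row_unimod y.1.1 o
      rw [AddSubmonoidClass.coe_finset_sum, Finset.sum_apply]
      refine this.symm.trans (Finset.sum_congr rfl fun q _ => ?_)
      rw [mul_comm]
      rfl
    rw [this]
    exact Ideal.sum_mem _ fun q _ => Ideal.mul_mem_left _ _ (hc q)
  have hT := Ideal.span_pow_eq_top S hS M
  have hI : I = ⊤ := by
    rw [eq_top_iff, ← hT, Ideal.span_le]
    rintro _ ⟨r, rfl | ⟨j, hj, rfl⟩, rfl⟩
    · exact h1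
    · exact h2 j hj
  have h1I : (1 : A) ∈ I := by rw [hI]; trivial
  intro a b
  have := h1I a b
  have e : ((1 : A) : Y → ℂ) * f a b = f a b := by simp
  rw [e] at this
  obtain ⟨P, hPP⟩ := mem_PolyS.mp this
  exact ⟨P, fun y hy => hPP ⟨y, hy⟩⟩

lemma poly_triv (hJ : ∀ i ∈ J, ∀ j ∈ J, i = j) : PolyOn X J := by
  intro a b
  refine ⟨MvPolynomial.C ((1 : Matrix (Fin N) (Fin N) ℂ) a b), fun y hy => ?_⟩
  have : MJ (pr X) J ≤ ⊥ := by
    rw [MJ, Subgroup.closure_le]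
    rintro _ ⟨i, j, t, hi, hj, hij, rfl⟩
    exact absurd (hJ i hi j hj) hij
  have := Subgroup.mem_bot.mp (this hy)
  subst this
  simp

lemma poly_all (H : Stein X) (hX : PolyFam X) (hn : 3 ≤ n) (J : Finset (Fin n)) : PolyOn X J := by
  induction J using Finset.induction_on with
  | empty => exact poly_triv (by simp)
  | insert o J ho ih =>
    rcases J.eq_empty_or_nonempty with rfl | ⟨k, hk⟩
    · exact poly_triv (by simp)
    · exact poly_step H hX hn ho hk ih

/-- extension theorem -/
theorem extend (H : Stein X) (hX : PolyFam X) (hn : 3 ≤ n)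
    (ρ : SpecialLinearGroup (Fin n) ℤ →* GL (Fin N) ℂ)
    (hρ : ∀ i j, i ≠ j → ∀ t : ℤ, X i j t = ρ (el i j t)) :
    ∃ ρ' : SpecialLinearGroup (Fin n) ℂ →* GL (Fin N) ℂ,
      (∀ a b, ∃ P : MvPolynomial (Fin n × Fin n) ℂ, ∀ g : SpecialLinearGroup (Fin n) ℂ,
        (ρ' g : Matrix (Fin N) (Fin N) ℂ) a b = MvPolynomial.eval (fun q => g q.1 q.2) P) ∧
      ρ = ρ'.comp (SpecialLinearGroup.map (Int.castRingHom ℂ)) := by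
  have hp := poly_all H hX hn Finset.univ
  have hgr : ∀ y ∈ MJ (pr X) Finset.univ, ∀ z ∈ MJ (pr X) Finset.univ, y.1 = z.1 → y.2 = z.2 := by
    intro y hy z hz h
    ext a b
    obtain ⟨P, hP⟩ := hp a b
    rw [hP y hy, hP z hz, h]
  have hsur : ∀ g : SpecialLinearGroup (Fin n) ℂ, ∃ u, (g, u) ∈ MJ (pr X) Finset.univ := by
    intro g
    have hg : g ∈ EG ℂ (Finset.univ : Finset (Fin n)) := by rw [EG_univ]; trivial
    have : EG ℂ (Finset.univ : Finset (Fin n)) ≤ (MJ (pr X) Finset.univ).map (MonoidHom.fst _ _) := by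
      rw [EG, Subgroup.closure_le]
      rintro _ ⟨i, hi, j, hj, hij, t, rfl⟩
      exact ⟨pr X i j t, mem_MJ hi hj hij t, rfl⟩
    obtain ⟨⟨g', u⟩, hu, rfl⟩ := this hg
    exact ⟨u, hu⟩
  choose r hr using hsur
  let ρ' : SpecialLinearGroup (Fin n) ℂ →* GL (Fin N) ℂ := MonoidHom.mk' r (fun g h =>
    hgr _ (hr (g * h)) _ (Subgroup.mul_mem _ (hr g) (hr h)) rfl)
  refine ⟨ρ', fun a b => ?_, ?_⟩
  · obtain ⟨P, hP⟩ := hp a b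
    exact ⟨P, fun g => hP _ (hr g)⟩
  · have hz : ∀ g : SpecialLinearGroup (Fin n) ℤ,
        (SpecialLinearGroup.map (Int.castRingHom ℂ) g, ρ g) ∈ MJ (pr X) Finset.univ := by
      intro g
      have hg : g ∈ EG ℤ (Finset.univ : Finset (Fin n)) := by rw [EG_univ]; trivial
      have : EG ℤ (Finset.univ : Finset (Fin n)) ≤ (MJ (pr X) Finset.univ).comap
          ((SpecialLinearGroup.map (Int.castRingHom ℂ)).prod ρ) := by
        rw [EG, Subgroup.closure_le]
        rintro _ ⟨i, hi, j, hj, hij, t, rfl⟩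
        have e : ((SpecialLinearGroup.map (Int.castRingHom ℂ)).prod ρ) (el i j t) =
            pr X i j (t : ℂ) := by
          refine Prod.ext ?_ (hρ i j hij t).symm
          apply Subtype.ext
          ext p q
          show ((el i j t : SpecialLinearGroup (Fin n) ℤ) p q : ℂ) = el i j (t : ℂ) p q
          rw [el_apply hij, el_apply hij]
          simp only [Matrix.one_apply]
          split_ifs <;> simp
        show ((SpecialLinearGroup.map (Int.castRingHom ℂ)).prod ρ) (el i j t) ∈
          MJ (pr X) Finset.univ
        rw [e]
        exact mem_MJ hi hj hij _
      exact this hg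
    ext1 g
    exact hgr _ (hz g) _ (hr _) rfl

end main
end SLP


namespace SLP
section heis
variable {ι V : Type*} [DecidableEq ι] [AddCommGroup V] [Module ℂ V] [FiniteDimensional ℂ V]

lemma heis (x y : ι → V →ₗ[ℂ] V) (Z : V →ₗ[ℂ] V) (l : ℂ) (hl : l ≠ 1)
    (ix : ∀ j, Function.Injective (x j)) (iy : ∀ j, Function.Injective (y j))
    (xx : ∀ i j, i ≠ j → ∀ v, x i (x j v) = x j (x i v))
    (xy : ∀ i j, i ≠ j → ∀ v, x i (y j v) = y j (x i v))
    (hh : ∀ i v, x i (y i v) = Z (y i (x i v))) (s : Finset ι) :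
    ∀ W : Submodule ℂ V, W ≠ ⊥ → (∀ w ∈ W, Z w = l • w) →
      (∀ j ∈ s, ∀ w ∈ W, x j w ∈ W ∧ y j w ∈ W) → 2 ^ s.card ≤ Module.finrank ℂ W := by
  induction s using Finset.induction_on with
  | empty =>
    intro W hW _ _
    rw [Finset.card_empty, pow_zero]
    exact Submodule.one_le_finrank_iff.mpr hW
  | insert m s hm ih =>
    intro W hW hZ hst
    have hxm : ∀ w ∈ W, x m w ∈ W := fun w hw => (hst m (by simp) w hw).1
    have hym : ∀ w ∈ W, y m w ∈ W := fun w hw => (hst m (by simp) w hw).2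
    haveI : Nontrivial W := Submodule.nontrivial_iff_ne_bot.mpr hW
    obtain ⟨a, ha⟩ := Module.End.exists_eigenvalue ((x m).restrict hxm)
    obtain ⟨w, hw⟩ := ha.exists_hasEigenvector
    have hw0 : (w : V) ≠ 0 := fun h => hw.2 (Subtype.ext h)
    have hwa : x m w = a • (w : V) := by
      have := congrArg Subtype.val hw.apply_eq_smul
      simpa using this
    have ha0 : a ≠ 0 := by
      rintro rfl
      rw [zero_smul] at hwa
      exact hw0 (ix m (by rw [hwa, map_zero]))
    let W' : Submodule ℂ V := W ⊓ Module.End.eigenspace (x m) a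
    have hW' : ∀ v, v ∈ W' ↔ v ∈ W ∧ x m v = a • v := by
      intro v
      rw [Submodule.mem_inf, Module.End.mem_eigenspace_iff]
    have h1 : 2 ^ s.card ≤ Module.finrank ℂ W' := by
      apply ih
      · intro h
        have : (w : V) ∈ W' := (hW' _).mpr ⟨w.2, hwa⟩
        rw [h] at this
        exact hw0 ((Submodule.mem_bot ℂ).mp this)
      · intro v hv
        exact hZ v ((hW' v).mp hv).1
      · intro j hj v hv
        obtain ⟨hv1, hv2⟩ := (hW' v).mp hv
        have hmj : m ≠ j := fun h => hm (h ▸ hj)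
        have := hst j (by simp [hj]) v hv1
        refine ⟨(hW' _).mpr ⟨this.1, ?_⟩, (hW' _).mpr ⟨this.2, ?_⟩⟩
        · rw [xx m j hmj, hv2, map_smul]
        · rw [xy m j hmj, hv2, map_smul]
    let W2 : Submodule ℂ V := W'.map (y m)
    have h2 : Module.finrank ℂ W2 = Module.finrank ℂ W' :=
      (LinearEquiv.finrank_eq (Submodule.equivMapOfInjective (y m) (iy m) W')).symm
    have hd : W' ⊓ W2 = ⊥ := by
      rw [eq_bot_iff]
      rintro v ⟨hv1, hv2⟩
      obtain ⟨u, hu, rfl⟩ := hv2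
      obtain ⟨-, e1⟩ := (hW' _).mp hv1
      obtain ⟨hu1, e2⟩ := (hW' _).mp hu
      rw [hh, e2, map_smul, map_smul, hZ _ (hym u hu1), smul_smul] at e1
      rw [Submodule.mem_bot]
      have : (a * l - a) • y m u = 0 := by rw [sub_smul, e1, sub_self]
      rcases smul_eq_zero.mp this with h | h
      · exfalso
        apply hl
        have : a * (l - 1) = 0 := by rw [← h]; ring
        rcases mul_eq_zero.mp this with h | h
        · exact absurd h ha0
        · exact sub_eq_zero.mp h
      · exact h
    have h3 := Submodule.finrank_sup_add_finrank_inf_eq W' W2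
    rw [hd, finrank_bot, add_zero, h2] at h3
    have h4 : W' ⊔ W2 ≤ W := by
      apply sup_le inf_le_left
      rintro _ ⟨u, hu, rfl⟩
      exact hym u ((hW' u).mp hu).1
    have h5 := Submodule.finrank_mono h4
    rw [Finset.card_insert_of_notMem hm, pow_succ]
    omega
end heis

section unip
variable {n N : ℕ}

lemma nilp_of_eig (Z : Matrix (Fin N) (Fin N) ℂ)
    (h : ∀ l : ℂ, Module.End.HasEigenvalue (Matrix.toLin' Z) l → l = 1) : (Z - 1) ^ N = 0 := by
  obtain ⟨f, hf⟩ : ∃ f : Module.End ℂ (Fin N → ℂ), f = Matrix.toLin' Z := ⟨_, rfl⟩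
  rw [← hf] at h
  have htop := Module.End.iSup_maxGenEigenspace_eq_top f
  have h1 : f.maxGenEigenspace 1 = ⊤ := by
    rw [eq_top_iff, ← htop]
    apply iSup_le
    intro l
    by_cases hl : l = 1
    · rw [hl]
    · have : f.maxGenEigenspace l = ⊥ := by
        by_contra hne
        apply hl
        apply h
        apply Module.End.hasEigenvalue_of_hasGenEigenvalue (k := Module.finrank ℂ (Fin N → ℂ))
        unfold Module.End.HasGenEigenvalue Module.End.HasUnifEigenvalue
        rwa [Module.End.maxGenEigenspace_eq_genEigenspace_finrank] at hne
      rw [this]; exact bot_le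
  rw [Module.End.maxGenEigenspace_eq_genEigenspace_finrank] at h1
  have h2 : (f - 1) ^ N = 0 := by
    apply LinearMap.ext
    intro v
    have : v ∈ f.genEigenspace 1 (Module.finrank ℂ (Fin N → ℂ)) := by rw [h1]; trivial
    rw [Module.End.mem_genEigenspace_nat, Module.finrank_fin_fun, one_smul] at this
    exact this
  apply Matrix.toLin'.injective
  rw [map_zero, ← h2, Matrix.toLin'_pow, map_sub, Matrix.toLin'_one, hf]
  rfl

lemma unip (p q : Fin n) (hpq : p ≠ q) (hN : N < 2 ^ (n - 2))
    (ρ : SpecialLinearGroup (Fin n) ℤ →* GL (Fin N) ℂ) :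
    ((ρ (el p q 1) : Matrix (Fin N) (Fin N) ℂ) - 1) ^ N = 0 := by
  apply nilp_of_eig
  intro l hl
  by_contra hl1
  let ι := {j : Fin n // j ≠ p ∧ j ≠ q}
  let T : SpecialLinearGroup (Fin n) ℤ → (Fin N → ℂ) →ₗ[ℂ] (Fin N → ℂ) := fun g =>
    Matrix.toLin' (ρ g : Matrix (Fin N) (Fin N) ℂ)
  have Tm : ∀ g h v, T g (T h v) = T (g * h) v := by
    intro g h v
    simp only [T, Matrix.toLin'_apply, map_mul, Units.val_mul, Matrix.mulVec_mulVec]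
  have T1 : ∀ v, T 1 v = v := by intro v; simp [T]
  have Ti : ∀ g, Function.Injective (T g) := by
    intro g v w h
    have := congrArg (T g⁻¹) h
    rwa [Tm, Tm, inv_mul_cancel, T1, T1] at this
  have hc : Fintype.card ι = n - 2 := by
    rw [Fintype.card_subtype]
    have : (Finset.univ.filter fun j : Fin n => j ≠ p ∧ j ≠ q) = Finset.univ \ {p, q} := by
      ext j; simp
    rw [this, Finset.card_sdiff_of_subset (Finset.subset_univ _), Finset.card_pair hpq]
    simp
  have key := heis (fun j : ι => T (el p j.1 1)) (fun j : ι => T (el j.1 q 1)) (T (el p q 1)) l hl1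
    (fun j => Ti _) (fun j => Ti _)
    (by
      intro i j hij v
      rw [Tm, Tm, el_comm i.2.1.symm j.2.1.symm i.2.1 j.2.1.symm])
    (by
      intro i j hij v
      have : i.1 ≠ j.1 := fun h => hij (Subtype.ext h)
      rw [Tm, Tm, el_comm i.2.1.symm j.2.2 this hpq])
    (by
      intro i v
      rw [Tm, Tm, Tm, el_brk i.2.1.symm i.2.2 hpq, one_mul, mul_assoc])
    Finset.univ (Module.End.eigenspace (T (el p q 1)) l) hl
    (fun w hw => Module.End.mem_eigenspace_iff.mp hw)
    (by
      intro j _ w hw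
      rw [Module.End.mem_eigenspace_iff] at hw
      rw [Module.End.mem_eigenspace_iff, Module.End.mem_eigenspace_iff]
      refine ⟨?_, ?_⟩
      · rw [Tm, el_comm hpq j.2.1.symm hpq.symm j.2.1.symm, ← Tm, hw, map_smul]
      · rw [Tm, el_comm hpq j.2.2 j.2.2.symm hpq, ← Tm, hw, map_smul])
  rw [Finset.card_univ, hc] at key
  have := Submodule.finrank_le (Module.End.eigenspace (T (el p q 1)) l)
  rw [Module.finrank_fin_fun] at this
  omega
end unip
end SLP


namespace SLP
section onep
variable {n N : ℕ}

/-- one parameter group through a unipotent matrix -/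
noncomputable def op (Z : Matrix (Fin N) (Fin N) ℂ) (t : ℂ) : Matrix (Fin N) (Fin N) ℂ :=
  ∑ k ∈ Finset.range N, ((descPochhammer ℂ k).eval t / (k.factorial : ℂ)) • (Z - 1) ^ k

lemma op_nat {Z : Matrix (Fin N) (Fin N) ℂ} (hZ : (Z - 1) ^ N = 0) (m : ℕ) : op Z m = Z ^ m := by
  have h1 : Z ^ m = ((Z - 1) + 1) ^ m := by rw [sub_add_cancel]
  rw [h1, (Commute.one_right (Z - 1)).add_pow, op]
  have h2 : ∀ k ∉ Finset.range N, (Z - 1) ^ k = 0 := by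
    intro k hk
    have : N ≤ k := by simpa using hk
    exact pow_eq_zero_of_le this hZ
  have h3 : ∀ k, ((descPochhammer ℂ k).eval (m : ℂ) / (k.factorial : ℂ)) • (Z - 1) ^ k =
      (Z - 1) ^ k * 1 ^ (m - k) * (m.choose k : Matrix (Fin N) (Fin N) ℂ) := by
    intro k
    rw [← Nat.cast_choose_eq_descPochhammer_div, one_pow, mul_one, ← nsmul_eq_mul', Nat.cast_smul_eq_nsmul]
  rw [Finset.sum_congr rfl (fun k _ => h3 k)]
  rcases le_total N (m + 1) with h | h
  · apply Finset.sum_subset (Finset.range_mono h)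
    intro k _ hk
    rw [h2 k hk, zero_mul, zero_mul]
  · symm
    apply Finset.sum_subset (Finset.range_mono h)
    intro k _ hk
    have : m < k := by simpa using hk
    rw [Nat.choose_eq_zero_of_lt this, Nat.cast_zero, mul_zero]

lemma op_MR {Y : Type*} {A : Subalgebra ℂ (Y → ℂ)} (Z : Matrix (Fin N) (Fin N) ℂ) {r : Y → ℂ}
    (hr : r ∈ A) : MR A (fun y => op Z (r y)) := by
  intro a b
  simp only [op, Matrix.sum_apply, Matrix.smul_apply, smul_eq_mul, div_eq_mul_inv]
  exact mem_sum _ fun k _ => mem_mul (mem_mul (mem_poly hr _) (mem_const _)) (mem_const _)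

/-- polynomial curve -/
def PC (f : ℂ → Matrix (Fin N) (Fin N) ℂ) : Prop :=
  ∀ A : Subalgebra ℂ (ℂ → ℂ), (fun t : ℂ => t) ∈ A → MR A f

lemma PC.mul {f g : ℂ → Matrix (Fin N) (Fin N) ℂ} (hf : PC f) (hg : PC g) :
    PC (fun t => f t * g t) := fun A h => (hf A h).mul (hg A h)

lemma PC.const (c : Matrix (Fin N) (Fin N) ℂ) : PC (fun _ => c) := fun _ _ => MR.const c

lemma PC.op (Z : Matrix (Fin N) (Fin N) ℂ) : PC (fun t => op Z t) := fun _ h => op_MR Z h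
lemma PC.op1 (Z : Matrix (Fin N) (Fin N) ℂ) (s : ℂ) : PC (fun t => SLP.op Z (s + t)) :=
  fun _ h => op_MR Z (mem_add (mem_const s) h)
lemma PC.op2 (Z : Matrix (Fin N) (Fin N) ℂ) (s : ℂ) : PC (fun t => SLP.op Z (t + s)) :=
  fun _ h => op_MR Z (mem_add h (mem_const s))
lemma PC.op3 (Z : Matrix (Fin N) (Fin N) ℂ) (s : ℂ) : PC (fun t => SLP.op Z (s * t)) :=
  fun _ h => op_MR Z (mem_mul (mem_const s) h)
lemma PC.op4 (Z : Matrix (Fin N) (Fin N) ℂ) (s : ℂ) : PC (fun t => SLP.op Z (t * s)) :=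
  fun _ h => op_MR Z (mem_mul h (mem_const s))

lemma PC.dens {f g : ℂ → Matrix (Fin N) (Fin N) ℂ} (hf : PC f) (hg : PC g)
    (h : ∀ m : ℕ, f m = g m) (t : ℂ) : f t = g t := by
  obtain ⟨A, hid, hA⟩ := polyalg
  ext a b
  obtain ⟨p, hp⟩ := hA _ (hf A hid a b)
  obtain ⟨q, hq⟩ := hA _ (hg A hid a b)
  have : p = q := by
    apply Polynomial.eq_of_infinite_eval_eq
    have hi : (Set.range (fun m : ℕ => (m : ℂ))).Infinite :=
      Set.infinite_range_of_injective Nat.cast_injective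
    refine hi.mono ?_
    rintro _ ⟨m, rfl⟩
    show p.eval (m : ℂ) = q.eval (m : ℂ)
    rw [← hp, ← hq, h]
  have e1 := hp t
  have e2 := hq t
  rw [this, ← e2] at e1
  exact e1

lemma PC.dens2 {f g : ℂ → ℂ → Matrix (Fin N) (Fin N) ℂ} (hf : ∀ s, PC (fun t => f s t))
    (hg : ∀ s, PC (fun t => g s t)) (hf' : ∀ t, PC (fun s => f s t)) (hg' : ∀ t, PC (fun s => g s t))
    (h : ∀ m l : ℕ, f m l = g m l) (s t : ℂ) : f s t = g s t :=
  PC.dens (hf s) (hg s) (fun l => PC.dens (hf' l) (hg' l) (fun m => h m l) s) t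

lemma op_add {Z : Matrix (Fin N) (Fin N) ℂ} (hZ : (Z - 1) ^ N = 0) (s t : ℂ) :
    op Z (s + t) = op Z s * op Z t := by
  apply PC.dens2 (f := fun s t => op Z (s + t)) (g := fun s t => op Z s * op Z t)
  · exact fun s => PC.op1 Z s
  · exact fun s => (PC.const _).mul (PC.op Z)
  · exact fun s => PC.op2 Z s
  · exact fun s => (PC.op Z).mul (PC.const _)
  · intro m l
    rw [← Nat.cast_add, op_nat hZ, op_nat hZ, op_nat hZ, pow_add]

lemma op_comm {Z W : Matrix (Fin N) (Fin N) ℂ} (hZ : (Z - 1) ^ N = 0) (hW : (W - 1) ^ N = 0)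
    (h : ∀ m l : ℕ, Z ^ m * W ^ l = W ^ l * Z ^ m) (s t : ℂ) :
    op Z s * op W t = op W t * op Z s := by
  apply PC.dens2 (f := fun s t => op Z s * op W t) (g := fun s t => op W t * op Z s)
  · exact fun s => (PC.const _).mul (PC.op W)
  · exact fun s => (PC.op W).mul (PC.const _)
  · exact fun s => (PC.op Z).mul (PC.const _)
  · exact fun s => (PC.const _).mul (PC.op Z)
  · intro m l
    rw [op_nat hZ, op_nat hW, h]

lemma op_brk {Z W T : Matrix (Fin N) (Fin N) ℂ} (hZ : (Z - 1) ^ N = 0) (hW : (W - 1) ^ N = 0)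
    (hT : (T - 1) ^ N = 0)
    (h : ∀ m l : ℕ, Z ^ m * W ^ l = T ^ (m * l) * W ^ l * Z ^ m) (s t : ℂ) :
    op Z s * op W t = op T (s * t) * op W t * op Z s := by
  apply PC.dens2 (f := fun s t => op Z s * op W t) (g := fun s t => op T (s * t) * op W t * op Z s)
  · exact fun s => (PC.const _).mul (PC.op W)
  · exact fun s => ((PC.op3 T s).mul (PC.op W)).mul (PC.const _)
  · exact fun s => (PC.op Z).mul (PC.const _)
  · exact fun s => ((PC.op4 T s).mul (PC.const _)).mul (PC.op Z)
  · intro m l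
    rw [← Nat.cast_mul, op_nat hZ, op_nat hW, op_nat hT, h]

lemma op_zero {Z : Matrix (Fin N) (Fin N) ℂ} (hZ : (Z - 1) ^ N = 0) : op Z 0 = 1 := by
  have := op_nat hZ 0
  simpa using this

lemma op_neg {Z : Matrix (Fin N) (Fin N) ℂ} (hZ : (Z - 1) ^ N = 0) (t : ℂ) :
    op Z t * op Z (-t) = 1 := by
  rw [← op_add hZ, add_neg_cancel, op_zero hZ]

lemma op_neg' {Z : Matrix (Fin N) (Fin N) ℂ} (hZ : (Z - 1) ^ N = 0) (t : ℂ) :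
    op Z (-t) * op Z t = 1 := by
  rw [← op_add hZ, neg_add_cancel, op_zero hZ]

lemma el_nat {i j : Fin n} (h : i ≠ j) (m : ℕ) :
    (el i j (m : ℤ) : SpecialLinearGroup (Fin n) ℤ) = el i j 1 ^ m := by
  induction m with
  | zero =>
    have := el_add (R := ℤ) h 0 0
    simpa using this
  | succ m ih => rw [Nat.cast_succ, el_add h, ih, pow_succ]

theorem main_ext (hn : 3 ≤ n) (hN : N < 2 ^ (n - 2))
    (ρ : SpecialLinearGroup (Fin n) ℤ →* GL (Fin N) ℂ) :
    ∃ ρ' : SpecialLinearGroup (Fin n) ℂ →* GL (Fin N) ℂ,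
      (∀ a b, ∃ P : MvPolynomial (Fin n × Fin n) ℂ, ∀ g : SpecialLinearGroup (Fin n) ℂ,
        (ρ' g : Matrix (Fin N) (Fin N) ℂ) a b = MvPolynomial.eval (fun q => g q.1 q.2) P) ∧
      ρ = ρ'.comp (SpecialLinearGroup.map (Int.castRingHom ℂ)) := by
  obtain ⟨Z, hZdef⟩ : ∃ Z : Fin n → Fin n → Matrix (Fin N) (Fin N) ℂ,
      ∀ i j, Z i j = (ρ (el i j 1) : Matrix (Fin N) (Fin N) ℂ) := ⟨_, fun _ _ => rfl⟩
  have hZ : ∀ i j, i ≠ j → (Z i j - 1) ^ N = 0 := fun i j h => by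
    rw [hZdef]; exact unip i j h hN ρ
  have hp : ∀ i j, i ≠ j → ∀ m : ℕ, Z i j ^ m = (ρ (el i j (m : ℤ)) : Matrix (Fin N) (Fin N) ℂ) := by
    intro i j h m
    rw [hZdef, el_nat h, map_pow, Units.val_pow_eq_pow_val]
  obtain ⟨X, hX⟩ : ∃ X : Fin n → Fin n → ℂ → GL (Fin N) ℂ, ∀ i j, i ≠ j → ∀ t,
      (X i j t : Matrix (Fin N) (Fin N) ℂ) = op (Z i j) t := by
    refine ⟨fun i j t => if h : i ≠ j then ⟨op (Z i j) t, op (Z i j) (-t), op_neg (hZ i j h) t,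
      op_neg' (hZ i j h) t⟩ else 1, fun i j h t => ?_⟩
    dsimp only
    rw [dif_pos h]
  have H : Stein X := by
    refine ⟨?_, ?_, ?_⟩
    · intro i j h s t
      apply Units.ext
      rw [Units.val_mul, hX i j h, hX i j h, hX i j h, op_add (hZ i j h)]
    · intro i j k l hij hkl hjk hil s t
      apply Units.ext
      rw [Units.val_mul, Units.val_mul, hX i j hij, hX k l hkl]
      apply op_comm (hZ i j hij) (hZ k l hkl)
      intro m l'
      rw [hp i j hij, hp k l hkl, ← Units.val_mul, ← Units.val_mul, ← map_mul, ← map_mul,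
        el_comm hij hkl hjk hil]
    · intro i j k hij hjk hik s t
      apply Units.ext
      rw [Units.val_mul, Units.val_mul, Units.val_mul, hX i j hij, hX j k hjk, hX i k hik]
      apply op_brk (hZ i j hij) (hZ j k hjk) (hZ i k hik)
      intro m l'
      rw [hp i j hij, hp j k hjk, hp i k hik, ← Units.val_mul, ← Units.val_mul, ← Units.val_mul,
        ← map_mul, ← map_mul, ← map_mul, el_brk hij hjk hik, Nat.cast_mul]
  have hpf : PolyFam X := by
    intro i j h a b
    obtain ⟨A, hid, hA⟩ := polyalg
    obtain ⟨p, hp⟩ := hA _ (op_MR (Z i j) hid a b)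
    exact ⟨p, fun t => by rw [hX i j h]; exact hp t⟩
  refine extend H hpf hn ρ ?_
  have hnat : ∀ i j, i ≠ j → ∀ m : ℕ, X i j (m : ℂ) = ρ (el i j (m : ℤ)) := by
    intro i j h m
    apply Units.ext
    rw [hX i j h, op_nat (hZ i j h), hp i j h]
  intro i j h t
  obtain ⟨m, rfl | rfl⟩ := t.eq_nat_or_neg
  · rw [Int.cast_natCast]; exact hnat i j h m
  · rw [← el_inv h, map_inv, ← hnat i j h, eq_inv_iff_mul_eq_one, ← H.add i j h]
    have := H.add i j h 0 0
    rw [add_zero] at this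
    simpa using this
end onep
end SLP

namespace SLP
lemma growth (k : ℕ) : ∃ M : ℕ, ∀ n, M ≤ n → (n + 3) ^ k < 2 ^ (n + 3 - 2) := by
  have h := tendsto_pow_const_div_const_pow_of_one_lt k (r := (2 : ℝ)) (by norm_num)
  have h2 := h.eventually_lt_const (show (0 : ℝ) < 1 / 4 by norm_num)
  obtain ⟨M, hM⟩ := Filter.eventually_atTop.mp h2
  refine ⟨M, fun n hn => ?_⟩
  have := hM (n + 3) (by omega)
  rw [div_lt_iff₀ (by positivity)] at this
  have e : (1 / 4 : ℝ) * 2 ^ (n + 3) = 2 ^ (n + 1) := by ring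
  rw [e] at this
  have e2 : n + 3 - 2 = n + 1 := by omega
  rw [e2]
  exact_mod_cast this
end SLP


/-- A sequence `V_3, V_4, V_5, …` of finite-dimensional complex representations of
`SL_n(ℤ)` of polynomial dimension growth (`dim V_n ≤ n^k`) is eventually algebraic:
for all sufficiently large `n`, the representation `V_n` extends to an algebraic
representation of `SL_n(ℂ)`. -/
theorem eventually_algebraic_of_polynomial_growth (N : ℕ → ℕ)
    (ρ : ∀ n : ℕ, Matrix.SpecialLinearGroup (Fin (n + 3)) ℤ →* GL (Fin (N n)) ℂ)
    (k : ℕ) (hk : ∀ n : ℕ, N n ≤ (n + 3) ^ k) :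
    ∃ M : ℕ, ∀ n : ℕ, M ≤ n →
      ∃ ρ' : Matrix.SpecialLinearGroup (Fin (n + 3)) ℂ →* GL (Fin (N n)) ℂ,
        IsAlgebraicSL ρ' ∧
        ρ n = ρ'.comp (Matrix.SpecialLinearGroup.map (Int.castRingHom ℂ)) := by
  obtain ⟨M, hM⟩ := SLP.growth k
  refine ⟨M, fun n hn => ?_⟩
  obtain ⟨ρ', h1, h2⟩ := SLP.main_ext (by omega) ((hk n).trans_lt (hM n hn)) (ρ n)
  exact ⟨ρ', h1, h2⟩
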